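/- arXiv:2605.13389 — 2 statements merged into one kernel-verified Lean document; each statement's English description precedes it below -/
import Mathlib

section
/- Let $d \ge 1$ and $p \in (1,\infty)$. Set $\alpha_p = \max(1, p/2) - 1$ and $\beta_p = \min(1, p/2) - 1$, and set $\kappa_p = p-1$, $\kappa'_p = \min(2^{-1}, 2^{2-p})$ if $p \ge 2$, while $\kappa_p = 2^{2-p}(3-p)$, $\kappa'_p = p-1$ if $1 < p \le 2$. Let $k : \mathbb{R}^d \times \mathbb{R}^d \to [0,\infty)$ be measurable and $u, v : \mathbb{R}^d \to \mathbb{R}$ measurable with $\mathcal{E}_k(u,u) < \infty$, $\mathcal{E}_k(v,v) < \infty$ and $S := \mathcal{E}_k(u,u) + \mathcal{E}_k(v,v) > 0$. Then, with $D := \mathcal{E}_k(u,u-v) - \mathcal{E}_k(v,u-v) \ge 0$, one has $\frac{D^{\alpha_p+1}}{S^{\alpha_p}} \le 2^{p\alpha_p}\,\kappa_p^{\alpha_p+1}\, \mathcal{E}_k(u-v,u-v)$ and $\frac{D^{\beta_p+1}}{S^{\beta_p}} \ge 2^{p\beta_p}\,(\kappa'_p)^{\beta_p+1}\, \mathcal{E}_k(u-v,u-v)$.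 -/
open MeasureTheory

/-- The nonlocal form `𝓔_k(u,v)` over `ℝ^d × ℝ^d` (product Lebesgue measure). -/
noncomputable def nlForm (d : ℕ) (p : ℝ)
    (k : EuclideanSpace ℝ (Fin d) → EuclideanSpace ℝ (Fin d) → ℝ)
    (u v : EuclideanSpace ℝ (Fin d) → ℝ) : ℝ :=
  ∫ z : EuclideanSpace ℝ (Fin d) × EuclideanSpace ℝ (Fin d),
    |u z.1 - u z.2| ^ (p - 2) * (u z.1 - u z.2) * (v z.1 - v z.2) * k z.1 z.2

/-- The (finite) energy `𝓔_k(u,u) = ∫∫ |u(x)-u(y)|^p k(x,y)` as a real number. -/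
noncomputable def nlDiag (d : ℕ) (p : ℝ)
    (k : EuclideanSpace ℝ (Fin d) → EuclideanSpace ℝ (Fin d) → ℝ)
    (u : EuclideanSpace ℝ (Fin d) → ℝ) : ℝ :=
  ∫ z : EuclideanSpace ℝ (Fin d) × EuclideanSpace ℝ (Fin d),
    |u z.1 - u z.2| ^ p * k z.1 z.2

/-!
Absorb the kernel into the measure `ν = k(x,y) dx dy`: the increments `f(x,y) = u(x) - u(y)` and
`g(x,y) = v(x) - v(y)` lie in `L^p(ν)`, and `D = ∫ (φ(f) - φ(g)) (f - g) dν` with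
`φ(t) = |t|^(p-2) t`. For `p ≥ 2`, pointwise,
`2^(2-p) |a-b|^p ≤ (φ(a) - φ(b)) (a - b) ≤ (p-1) max(|a|,|b|)^(p-2) |a-b|^2`,
and both inequalities are reversed for `1 < p ≤ 2`. The bound by `|a-b|^p` comes from convexity
(concavity) and superadditivity (subadditivity) of `t^(p-1)`, the quadratic one from Bernoulli's
inequality. The first integrates directly; since `max(|a|,|b|)^p ≤ |a|^p + |b|^p`, Hölder's
inequality turns the second into an interpolation between `∫ |f|^p + |g|^p dν` and the other
integral. The constants `p-1` and `2^(2-p)` obtained this way imply the stated ones.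
-/

section PowerInequalities

variable {q a b : ℝ}

theorem rpow_eq_rpow_sub_one_mul (ha : 0 ≤ a) (hq : q ≠ 0) : a ^ q = a ^ (q - 1) * a := by
  rw [← Real.rpow_add_one' ha (by rwa [sub_add_cancel]), sub_add_cancel]

theorem one_add_mul_div_sub_one_mul_rpow (ha : 0 < a) :
    (1 + q * (b / a - 1)) * a ^ q = a ^ q - q * a ^ (q - 1) * (a - b) := by
  rw [Real.rpow_sub_one ha.ne']
  field_simp
  ring

theorem rpow_sub_rpow_le_mul_sub (hq : 1 ≤ q) (hb : 0 ≤ b) (hba : b ≤ a) :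
    a ^ q - b ^ q ≤ q * a ^ (q - 1) * (a - b) := by
  rcases (hb.trans hba).eq_or_lt with rfl | ha
  · simp [le_antisymm hba hb]
  have bernoulli : 1 + q * (b / a - 1) ≤ (b / a) ^ q := by
    simpa using one_add_mul_self_le_rpow_one_add (s := b / a - 1)
      (by linarith [div_nonneg hb ha.le]) hq
  rw [Real.div_rpow hb ha.le, le_div_iff₀ (by positivity),
    one_add_mul_div_sub_one_mul_rpow ha] at bernoulli
  linarith

theorem mul_sub_le_rpow_sub_rpow (hq₀ : 0 ≤ q) (hq₁ : q ≤ 1) (hb : 0 ≤ b) (hba : b ≤ a) :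
    q * a ^ (q - 1) * (a - b) ≤ a ^ q - b ^ q := by
  rcases (hb.trans hba).eq_or_lt with rfl | ha
  · simp [le_antisymm hba hb]
  have bernoulli : (b / a) ^ q ≤ 1 + q * (b / a - 1) := by
    simpa using rpow_one_add_le_one_add_mul_self (s := b / a - 1)
      (by linarith [div_nonneg hb ha.le]) hq₀ hq₁
  rw [Real.div_rpow hb ha.le, div_le_iff₀ (by positivity),
    one_add_mul_div_sub_one_mul_rpow ha] at bernoulli
  linarith

theorem rpow_add_rpow_le_mul_add (hq : 1 ≤ q) (hb : 0 ≤ b) (hba : b ≤ a) :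
    a ^ q + b ^ q ≤ a ^ (q - 1) * (a + b) := by
  have hq₀ : q ≠ 0 := by positivity
  rw [rpow_eq_rpow_sub_one_mul (hb.trans hba) hq₀, rpow_eq_rpow_sub_one_mul hb hq₀, mul_add]
  gcongr

theorem mul_add_le_rpow_add_rpow (hq₀ : 0 < q) (hq₁ : q ≤ 1) (hb : 0 ≤ b) (hba : b ≤ a) :
    a ^ (q - 1) * (a + b) ≤ a ^ q + b ^ q := by
  rw [rpow_eq_rpow_sub_one_mul (hb.trans hba) hq₀.ne', rpow_eq_rpow_sub_one_mul hb hq₀.ne', mul_add]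
  rcases hb.eq_or_lt with rfl | hb
  · simp
  gcongr a ^ (q - 1) * a + ?_ * b
  exact Real.rpow_le_rpow_of_nonpos hb hba (by linarith)

theorem two_rpow_one_sub_mul_add_rpow (ha : 0 ≤ a) (hb : 0 ≤ b) :
    (2 : ℝ) ^ (1 - q) * (a + b) ^ q = 2 * (1 / 2 * a + 1 / 2 * b) ^ q := by
  rw [← mul_add, Real.mul_rpow (by norm_num) (by positivity), one_div, Real.inv_rpow zero_le_two,
    Real.rpow_sub two_pos, Real.rpow_one]
  ring

theorem two_rpow_mul_add_rpow_le (hq : 1 ≤ q) (ha : 0 ≤ a) (hb : 0 ≤ b) :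
    (2 : ℝ) ^ (1 - q) * (a + b) ^ q ≤ a ^ q + b ^ q := by
  have midpoint := (convexOn_rpow hq).2 ha hb one_half_pos.le one_half_pos.le
    (add_halves 1)
  simp only [smul_eq_mul] at midpoint
  rw [two_rpow_one_sub_mul_add_rpow ha hb]
  linarith

theorem rpow_add_rpow_le_two_rpow_mul (hq₀ : 0 ≤ q) (hq₁ : q ≤ 1) (ha : 0 ≤ a) (hb : 0 ≤ b) :
    a ^ q + b ^ q ≤ (2 : ℝ) ^ (1 - q) * (a + b) ^ q := by
  have midpoint := (Real.concaveOn_rpow hq₀ hq₁).2 ha hb one_half_pos.le one_half_pos.le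
    (add_halves 1)
  simp only [smul_eq_mul] at midpoint
  rw [two_rpow_one_sub_mul_add_rpow ha hb]
  linarith

end PowerInequalities

section DualityMap

/-- The scalar duality map `t ↦ |t|^(p-2) t` of `L^p`. The factor `t` makes its value at `0` equal
to `0` for every `p`, whatever `0 ^ (p - 2)` is. -/
noncomputable def dualityMap (p t : ℝ) : ℝ := |t| ^ (p - 2) * t

/-- The monotonicity pairing `(φ(a) - φ(b)) (a - b)` of the duality map `φ`; its integral over the
increments is `D`. -/
noncomputable def dualityMapGap (p a b : ℝ) : ℝ := (dualityMap p a - dualityMap p b) * (a - b)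

variable {p a b : ℝ}

theorem dualityMap_neg : dualityMap p (-a) = -dualityMap p a := by
  simp [dualityMap]

theorem dualityMap_of_nonneg (hp : p ≠ 1) (ha : 0 ≤ a) : dualityMap p a = a ^ (p - 1) := by
  rw [dualityMap, abs_of_nonneg ha, rpow_eq_rpow_sub_one_mul ha (sub_ne_zero.2 hp)]
  ring_nf

theorem abs_dualityMap (hp : p ≠ 1) : |dualityMap p a| = |a| ^ (p - 1) := by
  rw [← dualityMap_of_nonneg hp (abs_nonneg a), dualityMap, dualityMap, abs_mul, abs_abs,
    abs_of_nonneg (by positivity)]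

theorem dualityMapGap_comm : dualityMapGap p a b = dualityMapGap p b a := by
  unfold dualityMapGap; ring

theorem dualityMapGap_neg_neg : dualityMapGap p (-a) (-b) = dualityMapGap p a b := by
  simp only [dualityMapGap, dualityMap_neg]; ring

theorem dualityMapGap_of_nonneg (hp : p ≠ 1) (ha : 0 ≤ a) (hb : 0 ≤ b) :
    dualityMapGap p a b = (a ^ (p - 1) - b ^ (p - 1)) * (a - b) := by
  rw [dualityMapGap, dualityMap_of_nonneg hp ha, dualityMap_of_nonneg hp hb]

theorem dualityMapGap_neg_of_nonneg (hp : p ≠ 1) (ha : 0 ≤ a) (hb : 0 ≤ b) :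
    dualityMapGap p a (-b) = (a ^ (p - 1) + b ^ (p - 1)) * (a + b) := by
  rw [dualityMapGap, dualityMap_neg, dualityMap_of_nonneg hp ha, dualityMap_of_nonneg hp hb,
    sub_neg_eq_add, sub_neg_eq_add]

theorem forall_of_symm_of_neg {α : Type*} [AddCommGroup α] [LinearOrder α] [IsOrderedAddMonoid α]
    {P : α → α → Prop} (symm : ∀ a b, P a b → P b a) (neg : ∀ a b, P a b → P (-a) (-b))
    (same_sign : ∀ a b, 0 ≤ b → b ≤ a → P a b)
    (opposite_sign : ∀ a b, 0 ≤ b → b ≤ a → P a (-b)) (a b : α) : P a b := by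
  wlog hab : |b| ≤ |a| generalizing a b
  · exact symm _ _ (this b a (le_of_not_ge hab))
  wlog ha : 0 ≤ a generalizing a b
  · simpa using neg _ _ (this (-a) (-b) (by simpa using hab) (neg_nonneg.2 (le_of_not_ge ha)))
  rw [abs_of_nonneg ha] at hab
  rcases le_total 0 b with hb | hb
  · exact same_sign a b hb (by rwa [abs_of_nonneg hb] at hab)
  · simpa using opposite_sign a (-b) (neg_nonneg.2 hb) (by rwa [abs_of_nonpos hb] at hab)

theorem dualityMapGap_le_max_rpow_mul_sq (hp : 2 ≤ p) (a b : ℝ) :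
    dualityMapGap p a b ≤ (p - 1) * max |a| |b| ^ (p - 2) * (a - b) ^ 2 := by
  have hp₁ : p ≠ 1 := by linarith
  have hp₂ : p - 2 = p - 1 - 1 := by ring
  induction a, b using forall_of_symm_of_neg with
  | symm a b h => rwa [dualityMapGap_comm, max_comm, ← neg_sub a b, neg_sq]
  | neg a b h => rwa [dualityMapGap_neg_neg, abs_neg, abs_neg, neg_sub_neg, ← neg_sub a b, neg_sq]
  | same_sign a b hb hba =>
    have ha := hb.trans hba
    rw [dualityMapGap_of_nonneg hp₁ ha hb, abs_of_nonneg ha, abs_of_nonneg hb, max_eq_left hba,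
      sq, ← mul_assoc, hp₂]
    gcongr
    exact rpow_sub_rpow_le_mul_sub (by linarith) hb hba
  | opposite_sign a b hb hba =>
    have ha := hb.trans hba
    rw [dualityMapGap_neg_of_nonneg hp₁ ha hb, abs_neg, abs_of_nonneg ha, abs_of_nonneg hb,
      max_eq_left hba, sub_neg_eq_add, sq, ← mul_assoc, hp₂, mul_assoc (p - 1)]
    gcongr
    exact (rpow_add_rpow_le_mul_add (by linarith) hb hba).trans
      (le_mul_of_one_le_left (by positivity) (by linarith))

theorem max_rpow_mul_sq_le_dualityMapGap (hp₁ : 1 < p) (hp₂ : p ≤ 2) (a b : ℝ) :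
    (p - 1) * max |a| |b| ^ (p - 2) * (a - b) ^ 2 ≤ dualityMapGap p a b := by
  have hp : p - 2 = p - 1 - 1 := by ring
  induction a, b using forall_of_symm_of_neg with
  | symm a b h => rwa [dualityMapGap_comm, max_comm, ← neg_sub a b, neg_sq]
  | neg a b h => rwa [dualityMapGap_neg_neg, abs_neg, abs_neg, neg_sub_neg, ← neg_sub a b, neg_sq]
  | same_sign a b hb hba =>
    have ha := hb.trans hba
    rw [dualityMapGap_of_nonneg hp₁.ne' ha hb, abs_of_nonneg ha, abs_of_nonneg hb, max_eq_left hba,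
      sq, ← mul_assoc, hp]
    gcongr
    exact mul_sub_le_rpow_sub_rpow (by linarith) (by linarith) hb hba
  | opposite_sign a b hb hba =>
    have ha := hb.trans hba
    rw [dualityMapGap_neg_of_nonneg hp₁.ne' ha hb, abs_neg, abs_of_nonneg ha, abs_of_nonneg hb,
      max_eq_left hba, sub_neg_eq_add, sq, ← mul_assoc, hp, mul_assoc (p - 1)]
    gcongr
    exact (mul_le_of_le_one_left (by positivity) (by linarith)).trans
      (mul_add_le_rpow_add_rpow (by linarith) (by linarith) hb hba)

theorem abs_sub_rpow_le_dualityMapGap (hp : 2 ≤ p) (a b : ℝ) :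
    (2 : ℝ) ^ (2 - p) * |a - b| ^ p ≤ dualityMapGap p a b := by
  have hp₁ : p ≠ 1 := by linarith
  have hp₀ : p ≠ 0 := by linarith
  induction a, b using forall_of_symm_of_neg with
  | symm a b h => rwa [dualityMapGap_comm, abs_sub_comm]
  | neg a b h => rwa [dualityMapGap_neg_neg, neg_sub_neg, abs_sub_comm]
  | same_sign a b hb hba =>
    have hab := sub_nonneg.2 hba
    rw [dualityMapGap_of_nonneg hp₁ (hb.trans hba) hb, abs_of_nonneg hab,
      rpow_eq_rpow_sub_one_mul hab hp₀, ← mul_assoc]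
    gcongr
    calc (2 : ℝ) ^ (2 - p) * (a - b) ^ (p - 1) ≤ (a - b) ^ (p - 1) :=
          mul_le_of_le_one_left (by positivity)
            (Real.rpow_le_one_of_one_le_of_nonpos one_le_two (by linarith))
      _ ≤ a ^ (p - 1) - b ^ (p - 1) := by
          have := Real.add_rpow_le_rpow_add hab hb (show 1 ≤ p - 1 by linarith)
          rw [sub_add_cancel] at this
          linarith
  | opposite_sign a b hb hba =>
    have ha := hb.trans hba
    rw [dualityMapGap_neg_of_nonneg hp₁ ha hb, sub_neg_eq_add, abs_of_nonneg (by positivity),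
      rpow_eq_rpow_sub_one_mul (by positivity) hp₀, ← mul_assoc,
      show 2 - p = 1 - (p - 1) by ring]
    gcongr
    exact two_rpow_mul_add_rpow_le (by linarith) ha hb

theorem dualityMapGap_le_abs_sub_rpow (hp₁ : 1 < p) (hp₂ : p ≤ 2) (a b : ℝ) :
    dualityMapGap p a b ≤ (2 : ℝ) ^ (2 - p) * |a - b| ^ p := by
  have hp₀ : p ≠ 0 := by linarith
  induction a, b using forall_of_symm_of_neg with
  | symm a b h => rwa [dualityMapGap_comm, abs_sub_comm]
  | neg a b h => rwa [dualityMapGap_neg_neg, neg_sub_neg, abs_sub_comm]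
  | same_sign a b hb hba =>
    have hab := sub_nonneg.2 hba
    rw [dualityMapGap_of_nonneg hp₁.ne' (hb.trans hba) hb, abs_of_nonneg hab,
      rpow_eq_rpow_sub_one_mul hab hp₀, ← mul_assoc]
    gcongr
    calc a ^ (p - 1) - b ^ (p - 1) ≤ (a - b) ^ (p - 1) := by
          have := Real.rpow_add_le_add_rpow hab hb (show 0 ≤ p - 1 by linarith) (by linarith)
          rw [sub_add_cancel] at this
          linarith
      _ ≤ (2 : ℝ) ^ (2 - p) * (a - b) ^ (p - 1) :=
          le_mul_of_one_le_left (by positivity) (Real.one_le_rpow one_le_two (by linarith))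
  | opposite_sign a b hb hba =>
    have ha := hb.trans hba
    rw [dualityMapGap_neg_of_nonneg hp₁.ne' ha hb, sub_neg_eq_add, abs_of_nonneg (by positivity),
      rpow_eq_rpow_sub_one_mul (by positivity) hp₀, ← mul_assoc,
      show 2 - p = 1 - (p - 1) by ring]
    gcongr
    exact rpow_add_rpow_le_two_rpow_mul (by linarith) (by linarith) ha hb

theorem dualityMapGap_nonneg (hp : 1 < p) (a b : ℝ) : 0 ≤ dualityMapGap p a b := by
  rcases le_total 2 p with h | h
  · exact le_trans (by positivity) (abs_sub_rpow_le_dualityMapGap h a b)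
  · have := sub_pos.2 hp
    exact le_trans (by positivity) (max_rpow_mul_sq_le_dualityMapGap hp h a b)

end DualityMap

section Hoelder

variable {X : Type*} [MeasurableSpace X] {ν : Measure X} {s t : ℝ} {f g : X → ℝ}

theorem integrable_rpow_mul_rpow (hs : 0 ≤ s) (ht : 0 ≤ t) (hst : s + t = 1) (hf₀ : ∀ x, 0 ≤ f x)
    (hg₀ : ∀ x, 0 ≤ g x) (hf : Integrable f ν) (hg : Integrable g ν) :
    Integrable (fun x ↦ f x ^ s * g x ^ t) ν := by
  have young : ∀ x, f x ^ s * g x ^ t ≤ s * f x + t * g x := fun x ↦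
    Real.geom_mean_le_arith_mean2_weighted hs ht (hf₀ x) (hg₀ x) hst
  refine ((hf.const_mul s).add (hg.const_mul t)).mono'
    ((hf.aemeasurable.pow_const s).mul (hg.aemeasurable.pow_const t)).aestronglyMeasurable
    (.of_forall fun x ↦ ?_)
  have := hf₀ x
  have := hg₀ x
  rw [Real.norm_of_nonneg (by positivity)]
  exact young x

theorem integral_rpow_mul_rpow_le (hs : 0 ≤ s) (ht : 0 ≤ t) (hst : s + t = 1)
    (hf₀ : ∀ x, 0 ≤ f x) (hg₀ : ∀ x, 0 ≤ g x) (hf : Integrable f ν) (hg : Integrable g ν) :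
    ∫ x, f x ^ s * g x ^ t ∂ν ≤ (∫ x, f x ∂ν) ^ s * (∫ x, g x ∂ν) ^ t := by
  have hF : 0 ≤ ∫ x, f x ∂ν := integral_nonneg hf₀
  have hG : 0 ≤ ∫ x, g x ∂ν := integral_nonneg hg₀
  have hfg : ∀ x, 0 ≤ f x ^ s * g x ^ t := fun x ↦
    mul_nonneg (Real.rpow_nonneg (hf₀ x) s) (Real.rpow_nonneg (hg₀ x) t)
  rw [← ENNReal.ofReal_le_ofReal_iff (by positivity), ENNReal.ofReal_mul (by positivity),
    ← ENNReal.ofReal_rpow_of_nonneg hF hs, ← ENNReal.ofReal_rpow_of_nonneg hG ht,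
    ofReal_integral_eq_lintegral_ofReal (integrable_rpow_mul_rpow hs ht hst hf₀ hg₀ hf hg)
      (.of_forall hfg),
    ofReal_integral_eq_lintegral_ofReal hf (.of_forall hf₀),
    ofReal_integral_eq_lintegral_ofReal hg (.of_forall hg₀)]
  simp only [ENNReal.ofReal_mul (Real.rpow_nonneg (hf₀ _) s),
    ← ENNReal.ofReal_rpow_of_nonneg (hf₀ _) hs, ← ENNReal.ofReal_rpow_of_nonneg (hg₀ _) ht]
  exact ENNReal.lintegral_mul_norm_pow_le hf.aemeasurable.ennreal_ofReal
    hg.aemeasurable.ennreal_ofReal hs ht hst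

theorem integral_le_rpow_mul_rpow {h : X → ℝ} (hs : 0 ≤ s) (ht : 0 ≤ t) (hst : s + t = 1)
    (hf₀ : ∀ x, 0 ≤ f x) (hg₀ : ∀ x, 0 ≤ g x) (hf : Integrable f ν) (hg : Integrable g ν)
    (hh₀ : ∀ x, 0 ≤ h x) (hle : ∀ x, h x ≤ f x ^ s * g x ^ t) :
    ∫ x, h x ∂ν ≤ (∫ x, f x ∂ν) ^ s * (∫ x, g x ∂ν) ^ t :=
  (integral_mono_of_nonneg (.of_forall hh₀) (integrable_rpow_mul_rpow hs ht hst hf₀ hg₀ hf hg)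
    (.of_forall hle)).trans (integral_rpow_mul_rpow_le hs ht hst hf₀ hg₀ hf hg)

end Hoelder

section Interpolation

variable {p : ℝ}

theorem max_rpow_le_rpow_add_rpow {x y : ℝ} (hx : 0 ≤ x) (hy : 0 ≤ y) :
    max x y ^ p ≤ x ^ p + y ^ p := by
  rcases max_choice x y with h | h <;> rw [h]
  · exact le_add_of_nonneg_right (by positivity)
  · exact le_add_of_nonneg_left (by positivity)

theorem dualityMapGap_le_rpow_mul_rpow (hp : 2 ≤ p) (a b : ℝ) :
    dualityMapGap p a b ≤
      (p - 1) * ((|a| ^ p + |b| ^ p) ^ (1 - 2 / p) * (|a - b| ^ p) ^ (2 / p)) := by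
  have hp₀ : p ≠ 0 := by linarith
  have hp₁ : 0 ≤ p - 1 := by linarith
  have hs : 0 ≤ 1 - 2 / p := sub_nonneg.2 ((div_le_one (by linarith)).2 hp)
  have max_eq : max |a| |b| ^ (p - 2) = (max |a| |b| ^ p) ^ (1 - 2 / p) := by
    rw [← Real.rpow_mul (by positivity), mul_sub, mul_div_cancel₀ _ hp₀, mul_one]
  have sub_eq : (a - b) ^ 2 = (|a - b| ^ p) ^ (2 / p) := by
    rw [← Real.rpow_mul (by positivity), mul_div_cancel₀ _ hp₀, Real.rpow_two, sq_abs]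
  refine (dualityMapGap_le_max_rpow_mul_sq hp a b).trans ?_
  rw [max_eq, sub_eq, mul_assoc]
  gcongr
  exact max_rpow_le_rpow_add_rpow (abs_nonneg a) (abs_nonneg b)

theorem abs_sub_rpow_le_rpow_mul_rpow (hp₁ : 1 < p) (hp₂ : p ≤ 2) (a b : ℝ) :
    (p - 1) ^ (p / 2) * |a - b| ^ p ≤
      dualityMapGap p a b ^ (p / 2) * (|a| ^ p + |b| ^ p) ^ (1 - p / 2) := by
  have hgap := dualityMapGap_nonneg hp₁ a b
  have hp₀ : 0 ≤ p - 1 := by linarith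
  rcases (le_max_of_le_left (abs_nonneg a) : 0 ≤ max |a| |b|).eq_or_lt with hM | hM
  · have ha : a = 0 := abs_nonpos_iff.1 (hM ▸ le_max_left |a| |b|)
    have hb : b = 0 := abs_nonpos_iff.1 (hM ▸ le_max_right |a| |b|)
    rw [ha, hb, sub_zero, abs_zero, Real.zero_rpow (by linarith), mul_zero]
    rw [ha, hb] at hgap
    positivity
  have sq_le : (p - 1) * |a - b| ^ (2 : ℝ) ≤ dualityMapGap p a b * max |a| |b| ^ (2 - p) := by
    rw [Real.rpow_two, sq_abs, ← neg_sub p 2, Real.rpow_neg hM.le, ← div_eq_mul_inv,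
      le_div_iff₀ (by positivity), mul_right_comm]
    exact max_rpow_mul_sq_le_dualityMapGap hp₁ hp₂ a b
  calc (p - 1) ^ (p / 2) * |a - b| ^ p = ((p - 1) * |a - b| ^ (2 : ℝ)) ^ (p / 2) := by
        rw [Real.mul_rpow hp₀ (by positivity), ← Real.rpow_mul (abs_nonneg _),
          mul_div_cancel₀ _ two_ne_zero]
    _ ≤ (dualityMapGap p a b * max |a| |b| ^ (2 - p)) ^ (p / 2) := by gcongr
    _ = dualityMapGap p a b ^ (p / 2) * (max |a| |b| ^ p) ^ (1 - p / 2) := by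
        rw [Real.mul_rpow hgap (by positivity), ← Real.rpow_mul hM.le, ← Real.rpow_mul hM.le]
        ring_nf
    _ ≤ dualityMapGap p a b ^ (p / 2) * (|a| ^ p + |b| ^ p) ^ (1 - p / 2) := by
        gcongr
        · linarith
        · exact max_rpow_le_rpow_add_rpow (abs_nonneg a) (abs_nonneg b)

end Interpolation

section LpForms

variable {X : Type*} [MeasurableSpace X]

/-- The `p`-th power of the `L^p(ν)` norm as a real number; it is `0` if `|f|^p` is not
integrable. -/
noncomputable def lpEnergy (ν : Measure X) (p : ℝ) (f : X → ℝ) : ℝ := ∫ x, |f x| ^ p ∂ν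

/-- The pairing `∫ |f|^(p-2) f h dν` of `h` with the image of `f` under the duality map; applied to
increments it is the nonlocal form. -/
noncomputable def dualityForm (ν : Measure X) (p : ℝ) (f h : X → ℝ) : ℝ :=
  ∫ x, dualityMap p (f x) * h x ∂ν

variable {ν : Measure X} {p : ℝ} {f g : X → ℝ}

theorem lpEnergy_nonneg : 0 ≤ lpEnergy ν p f :=
  integral_nonneg fun _ ↦ by positivity

theorem integrable_abs_rpow (hp : 0 < p) (hf : MemLp f (ENNReal.ofReal p) ν) :
    Integrable (fun x ↦ |f x| ^ p) ν := by
  simpa [ENNReal.toReal_ofReal hp.le] using hf.integrable_norm_rpow (by simpa) (by simp)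

theorem abs_dualityMap_mul_le (hp : 1 < p) (a b : ℝ) :
    |dualityMap p a * b| ≤ |a| ^ p + |b| ^ p := by
  rw [abs_mul, abs_dualityMap hp.ne']
  calc |a| ^ (p - 1) * |b| ≤ max |a| |b| ^ (p - 1) * max |a| |b| := by
        gcongr
        · exact le_max_left _ _
        · exact le_max_right _ _
    _ = max |a| |b| ^ p := (rpow_eq_rpow_sub_one_mul (by positivity) (by linarith)).symm
    _ ≤ |a| ^ p + |b| ^ p := max_rpow_le_rpow_add_rpow (abs_nonneg a) (abs_nonneg b)

theorem integrable_dualityMap_mul (hp : 1 < p) (hf : MemLp f (ENNReal.ofReal p) ν)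
    (hg : MemLp g (ENNReal.ofReal p) ν) : Integrable (fun x ↦ dualityMap p (f x) * g x) ν := by
  have hfm := hf.aestronglyMeasurable.aemeasurable
  refine ((integrable_abs_rpow (by linarith) hf).add (integrable_abs_rpow (by linarith) hg)).mono'
    (((hfm.abs.pow_const (p - 2)).mul hfm).aestronglyMeasurable.mul hg.aestronglyMeasurable)
    (.of_forall fun x ↦ abs_dualityMap_mul_le hp (f x) (g x))

theorem integrable_dualityMapGap (hp : 1 < p) (hf : MemLp f (ENNReal.ofReal p) ν)
    (hg : MemLp g (ENNReal.ofReal p) ν) : Integrable (fun x ↦ dualityMapGap p (f x) (g x)) ν := by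
  simpa only [dualityMapGap, sub_mul] using! (integrable_dualityMap_mul hp hf (hf.sub hg)).sub
    (integrable_dualityMap_mul hp hg (hf.sub hg))

theorem dualityForm_sub_dualityForm (hp : 1 < p) (hf : MemLp f (ENNReal.ofReal p) ν)
    (hg : MemLp g (ENNReal.ofReal p) ν) :
    dualityForm ν p f (f - g) - dualityForm ν p g (f - g) =
      ∫ x, dualityMapGap p (f x) (g x) ∂ν := by
  simp only [dualityForm, dualityMapGap, sub_mul]
  exact (integral_sub (integrable_dualityMap_mul hp hf (hf.sub hg))
    (integrable_dualityMap_mul hp hg (hf.sub hg))).symm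

theorem integral_dualityMapGap_nonneg (hp : 1 < p) :
    0 ≤ ∫ x, dualityMapGap p (f x) (g x) ∂ν :=
  integral_nonneg fun x ↦ dualityMapGap_nonneg hp (f x) (g x)

theorem lpEnergy_sub_le_integral_dualityMapGap (hp : 2 ≤ p) (hf : MemLp f (ENNReal.ofReal p) ν)
    (hg : MemLp g (ENNReal.ofReal p) ν) :
    (2 : ℝ) ^ (2 - p) * lpEnergy ν p (f - g) ≤ ∫ x, dualityMapGap p (f x) (g x) ∂ν := by
  rw [lpEnergy, ← integral_const_mul]
  exact integral_mono ((integrable_abs_rpow (by linarith) (hf.sub hg)).const_mul _)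
    (integrable_dualityMapGap (by linarith) hf hg)
    fun x ↦ abs_sub_rpow_le_dualityMapGap hp (f x) (g x)

theorem integral_dualityMapGap_le_lpEnergy_sub (hp₁ : 1 < p) (hp₂ : p ≤ 2)
    (hf : MemLp f (ENNReal.ofReal p) ν) (hg : MemLp g (ENNReal.ofReal p) ν) :
    ∫ x, dualityMapGap p (f x) (g x) ∂ν ≤ (2 : ℝ) ^ (2 - p) * lpEnergy ν p (f - g) := by
  rw [lpEnergy, ← integral_const_mul]
  exact integral_mono (integrable_dualityMapGap hp₁ hf hg)
    ((integrable_abs_rpow (by linarith) (hf.sub hg)).const_mul _)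
    fun x ↦ dualityMapGap_le_abs_sub_rpow hp₁ hp₂ (f x) (g x)

theorem lpEnergy_add_lpEnergy (hp : 0 < p) (hf : MemLp f (ENNReal.ofReal p) ν)
    (hg : MemLp g (ENNReal.ofReal p) ν) :
    lpEnergy ν p f + lpEnergy ν p g = ∫ x, (|f x| ^ p + |g x| ^ p) ∂ν :=
  (integral_add (integrable_abs_rpow hp hf) (integrable_abs_rpow hp hg)).symm

theorem integral_dualityMapGap_rpow_le (hp : 2 ≤ p) (hf : MemLp f (ENNReal.ofReal p) ν)
    (hg : MemLp g (ENNReal.ofReal p) ν) :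
    (∫ x, dualityMapGap p (f x) (g x) ∂ν) ^ (p / 2) ≤ (p - 1) ^ (p / 2) *
      ((lpEnergy ν p f + lpEnergy ν p g) ^ (p / 2 - 1) * lpEnergy ν p (f - g)) := by
  have hp₀ : 0 < p := by linarith
  have hp₁ : 0 < p - 1 := by linarith
  have hS : 0 ≤ lpEnergy ν p f + lpEnergy ν p g := add_nonneg lpEnergy_nonneg lpEnergy_nonneg
  have hE : 0 ≤ lpEnergy ν p (f - g) := lpEnergy_nonneg
  have hoelder : (p - 1)⁻¹ * ∫ x, dualityMapGap p (f x) (g x) ∂ν ≤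
      (lpEnergy ν p f + lpEnergy ν p g) ^ (1 - 2 / p) * lpEnergy ν p (f - g) ^ (2 / p) := by
    rw [lpEnergy_add_lpEnergy hp₀ hf hg, ← integral_const_mul]
    exact integral_le_rpow_mul_rpow (sub_nonneg.2 ((div_le_one hp₀).2 hp)) (by positivity)
      (by ring) (fun x ↦ by positivity) (fun x ↦ by positivity)
      ((integrable_abs_rpow hp₀ hf).add (integrable_abs_rpow hp₀ hg))
      (integrable_abs_rpow hp₀ (hf.sub hg))
      (fun x ↦ mul_nonneg (by positivity) (dualityMapGap_nonneg (by linarith) (f x) (g x)))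
      fun x ↦ (inv_mul_le_iff₀ hp₁).2 (dualityMapGap_le_rpow_mul_rpow hp (f x) (g x))
  rw [inv_mul_le_iff₀ hp₁] at hoelder
  calc (∫ x, dualityMapGap p (f x) (g x) ∂ν) ^ (p / 2)
      ≤ ((p - 1) * ((lpEnergy ν p f + lpEnergy ν p g) ^ (1 - 2 / p) *
          lpEnergy ν p (f - g) ^ (2 / p))) ^ (p / 2) :=
        Real.rpow_le_rpow (integral_dualityMapGap_nonneg (by linarith)) hoelder (by positivity)
    _ = _ := by
        rw [Real.mul_rpow hp₁.le (by positivity), Real.mul_rpow (by positivity) (by positivity),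
          ← Real.rpow_mul hS, ← Real.rpow_mul hE, show (1 - 2 / p) * (p / 2) = p / 2 - 1 by
          field_simp, show 2 / p * (p / 2) = 1 by field_simp, Real.rpow_one]

theorem lpEnergy_sub_le_integral_dualityMapGap_rpow (hp₁ : 1 < p) (hp₂ : p ≤ 2)
    (hf : MemLp f (ENNReal.ofReal p) ν) (hg : MemLp g (ENNReal.ofReal p) ν) :
    (p - 1) ^ (p / 2) * lpEnergy ν p (f - g) ≤ (∫ x, dualityMapGap p (f x) (g x) ∂ν) ^ (p / 2) *
      (lpEnergy ν p f + lpEnergy ν p g) ^ (1 - p / 2) := by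
  have hp₀ : 0 < p := by linarith
  have : 0 ≤ p - 1 := by linarith
  rw [lpEnergy_add_lpEnergy hp₀ hf hg, lpEnergy, ← integral_const_mul]
  exact integral_le_rpow_mul_rpow (by positivity) (by linarith) (by ring)
    (fun x ↦ dualityMapGap_nonneg hp₁ (f x) (g x)) (fun x ↦ by positivity)
    (integrable_dualityMapGap hp₁ hf hg)
    ((integrable_abs_rpow hp₀ hf).add (integrable_abs_rpow hp₀ hg)) (fun x ↦ by positivity)
    fun x ↦ abs_sub_rpow_le_rpow_mul_rpow hp₁ hp₂ (f x) (g x)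

end LpForms

theorem stmt_9_general {X : Type*} [MeasurableSpace X] {ν : Measure X} {p : ℝ} {f g : X → ℝ}
    (hp : 1 < p) (hf : MemLp f (ENNReal.ofReal p) ν)
    (hg : MemLp g (ENNReal.ofReal p) ν) (hS : 0 < lpEnergy ν p f + lpEnergy ν p g) :
    0 ≤ dualityForm ν p f (f - g) - dualityForm ν p g (f - g) ∧
    (dualityForm ν p f (f - g) - dualityForm ν p g (f - g)) ^ max 1 (p / 2) /
        (lpEnergy ν p f + lpEnergy ν p g) ^ (max 1 (p / 2) - 1) ≤
      max (p - 1) (2 ^ (2 - p)) ^ max 1 (p / 2) * lpEnergy ν p (f - g) ∧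
    min (p - 1) (2 ^ (2 - p)) ^ min 1 (p / 2) * lpEnergy ν p (f - g) ≤
      (dualityForm ν p f (f - g) - dualityForm ν p g (f - g)) ^ min 1 (p / 2) /
        (lpEnergy ν p f + lpEnergy ν p g) ^ (min 1 (p / 2) - 1) := by
  rw [dualityForm_sub_dualityForm hp hf hg]
  refine ⟨integral_dualityMapGap_nonneg hp, ?_⟩
  rcases le_total 2 p with h | h
  · have hpow : (2 : ℝ) ^ (2 - p) ≤ p - 1 :=
      (Real.rpow_le_one_of_one_le_of_nonpos one_le_two (by linarith)).trans (by linarith)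
    rw [max_eq_right (by linarith : 1 ≤ p / 2), min_eq_left (by linarith : 1 ≤ p / 2),
      max_eq_left hpow, min_eq_right hpow, div_le_iff₀ (by positivity), mul_right_comm, mul_assoc]
    exact ⟨integral_dualityMapGap_rpow_le h hf hg, by
      simpa using lpEnergy_sub_le_integral_dualityMapGap h hf hg⟩
  · have hpow : p - 1 ≤ (2 : ℝ) ^ (2 - p) :=
      le_trans (by linarith) (Real.one_le_rpow one_le_two (by linarith))
    rw [max_eq_left (by linarith : p / 2 ≤ 1), min_eq_right (by linarith : p / 2 ≤ 1),
      max_eq_right hpow, min_eq_left hpow, div_eq_mul_inv _ (_ ^ (p / 2 - 1)),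
      ← Real.rpow_neg hS.le, neg_sub]
    exact ⟨by simpa using integral_dualityMapGap_le_lpEnergy_sub hp h hf hg,
      lpEnergy_sub_le_integral_dualityMapGap_rpow hp h hf hg⟩

section Constants

variable {p : ℝ}

theorem max_le_upper_constant :
    max (p - 1) (2 ^ (2 - p)) ≤ if 2 ≤ p then p - 1 else (2 : ℝ) ^ (2 - p) * (3 - p) := by
  split_ifs with h
  · exact max_le le_rfl
      ((Real.rpow_le_one_of_one_le_of_nonpos one_le_two (by linarith)).trans (by linarith))
  · have hpow : 1 ≤ (2 : ℝ) ^ (2 - p) := Real.one_le_rpow one_le_two (by linarith)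
    exact max_le (by nlinarith) (le_mul_of_one_le_right (by positivity) (by linarith))

theorem lower_constant_le_min :
    (if 2 ≤ p then min (2⁻¹ : ℝ) (2 ^ (2 - p)) else p - 1) ≤ min (p - 1) (2 ^ (2 - p)) := by
  split_ifs with h
  · exact min_le_min_right _ (by linarith)
  · exact le_min le_rfl (le_trans (by linarith) (Real.one_le_rpow one_le_two (by linarith)))

theorem max_rpow_le_upper_constant (hp : 1 < p) :
    max (p - 1) (2 ^ (2 - p)) ^ max 1 (p / 2) ≤ (2 : ℝ) ^ (p * (max 1 (p / 2) - 1)) *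
      (if 2 ≤ p then p - 1 else (2 : ℝ) ^ (2 - p) * (3 - p)) ^ max 1 (p / 2) := by
  have hbase : 0 ≤ max (p - 1) ((2 : ℝ) ^ (2 - p)) := le_max_of_le_left (by linarith)
  have hpow := Real.rpow_le_rpow hbase max_le_upper_constant
    (le_max_of_le_left zero_le_one : 0 ≤ max 1 (p / 2))
  exact hpow.trans (le_mul_of_one_le_left ((Real.rpow_nonneg hbase _).trans hpow)
    (Real.one_le_rpow one_le_two
      (mul_nonneg (by linarith) (sub_nonneg.2 (le_max_left 1 (p / 2))))))

theorem lower_constant_le_min_rpow (hp : 1 < p) :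
    (2 : ℝ) ^ (p * (min 1 (p / 2) - 1)) *
      (if 2 ≤ p then min (2⁻¹ : ℝ) (2 ^ (2 - p)) else p - 1) ^ min 1 (p / 2) ≤
      min (p - 1) (2 ^ (2 - p)) ^ min 1 (p / 2) := by
  have hbase : 0 ≤ if 2 ≤ p then min (2⁻¹ : ℝ) (2 ^ (2 - p)) else p - 1 := by
    split_ifs
    · positivity
    · linarith
  have htwo : (2 : ℝ) ^ (p * (min 1 (p / 2) - 1)) ≤ 1 :=
    Real.rpow_le_one_of_one_le_of_nonpos one_le_two
      (mul_nonpos_of_nonneg_of_nonpos (by linarith) (sub_nonpos.2 (min_le_left 1 (p / 2))))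
  exact (mul_le_of_le_one_left (Real.rpow_nonneg hbase _) htwo).trans
    (Real.rpow_le_rpow hbase lower_constant_le_min (le_min zero_le_one (by linarith)))

end Constants

section Kernel

variable {X : Type*} [MeasurableSpace X] {μ : Measure X} {K : X → ℝ}

theorem integral_withDensity_ofReal (hK : Measurable K) (hK₀ : ∀ x, 0 ≤ K x) (f : X → ℝ) :
    ∫ x, f x ∂μ.withDensity (fun x ↦ ENNReal.ofReal (K x)) = ∫ x, f x * K x ∂μ := by
  rw [integral_withDensity_eq_integral_toReal_smul hK.ennreal_ofReal (by simp)]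
  simp only [ENNReal.toReal_ofReal (hK₀ _), smul_eq_mul, mul_comm]

theorem memLp_withDensity_ofReal {p : ℝ} {f : X → ℝ} (hp : 0 < p) (hK : Measurable K)
    (hK₀ : ∀ x, 0 ≤ K x) (hf : Measurable f) (hfK : Integrable (fun x ↦ |f x| ^ p * K x) μ) :
    MemLp f (ENNReal.ofReal p) (μ.withDensity fun x ↦ ENNReal.ofReal (K x)) := by
  rw [← integrable_norm_rpow_iff hf.aestronglyMeasurable (by simpa) (by simp),
    integrable_withDensity_iff hK.ennreal_ofReal (by simp)]
  simpa only [ENNReal.toReal_ofReal hp.le, ENNReal.toReal_ofReal (hK₀ _), Real.norm_eq_abs]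

end Kernel

section NonlocalForm

variable {X : Type*}

/-- The increment `(x, y) ↦ u x - u y` of `u`, as a function on pairs of points. -/
def increment (u : X → ℝ) (z : X × X) : ℝ := u z.1 - u z.2

theorem increment_sub (u v : X → ℝ) : increment (u - v) = increment u - increment v := by
  ext z
  simp only [increment, Pi.sub_apply]
  ring

/-- The measure `k(x,y) dx dy` on pairs of points; `ENNReal.ofReal` cuts `k` off at `0`. -/
noncomputable def kernelMeasure [MeasureSpace X] (k : X → X → ℝ) : Measure (X × X) :=
  volume.withDensity fun z ↦ ENNReal.ofReal (k z.1 z.2)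

theorem memLp_increment [MeasureSpace X] {p : ℝ} {k : X → X → ℝ} {u : X → ℝ} (hp : 0 < p)
    (hk : Measurable fun z : X × X ↦ k z.1 z.2) (hk₀ : ∀ x y, 0 ≤ k x y) (hu : Measurable u)
    (hEu : Integrable fun z : X × X ↦ |u z.1 - u z.2| ^ p * k z.1 z.2) :
    MemLp (increment u) (ENNReal.ofReal p) (kernelMeasure k) :=
  memLp_withDensity_ofReal hp hk (fun z ↦ hk₀ z.1 z.2)
    ((hu.comp measurable_fst).sub (hu.comp measurable_snd)) hEu

variable {d : ℕ} {p : ℝ} {k : EuclideanSpace ℝ (Fin d) → EuclideanSpace ℝ (Fin d) → ℝ}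

theorem nlForm_eq_dualityForm
    (hk : Measurable fun z : EuclideanSpace ℝ (Fin d) × EuclideanSpace ℝ (Fin d) ↦ k z.1 z.2)
    (hk₀ : ∀ x y, 0 ≤ k x y) (u w : EuclideanSpace ℝ (Fin d) → ℝ) :
    nlForm d p k u w = dualityForm (kernelMeasure k) p (increment u) (increment w) :=
  (integral_withDensity_ofReal hk (fun z ↦ hk₀ z.1 z.2) _).symm

theorem nlDiag_eq_lpEnergy
    (hk : Measurable fun z : EuclideanSpace ℝ (Fin d) × EuclideanSpace ℝ (Fin d) ↦ k z.1 z.2)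
    (hk₀ : ∀ x y, 0 ≤ k x y) (u : EuclideanSpace ℝ (Fin d) → ℝ) :
    nlDiag d p k u = lpEnergy (kernelMeasure k) p (increment u) :=
  (integral_withDensity_ofReal hk (fun z ↦ hk₀ z.1 z.2) _).symm

end NonlocalForm

/-- Mixed-exponent linearization estimates: with
`α_p = max(1,p/2)-1`, `β_p = min(1,p/2)-1`, and `κ_p, κ'_p` as in the two cases,
if `S = 𝓔_k(u,u)+𝓔_k(v,v) ∈ (0,∞)` then, with `D = 𝓔_k(u,u-v)-𝓔_k(v,u-v) ≥ 0`,
`D^{α_p+1}/S^{α_p} ≤ 2^{pα_p} κ_p^{α_p+1} 𝓔_k(u-v,u-v)` and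
`D^{β_p+1}/S^{β_p} ≥ 2^{pβ_p} (κ'_p)^{β_p+1} 𝓔_k(u-v,u-v)`. -/
theorem stmt_9 (d : ℕ) (hd : 1 ≤ d) (p : ℝ) (hp : 1 < p) (α β κ κ' : ℝ)
    (hα : α = max 1 (p / 2) - 1) (hβ : β = min 1 (p / 2) - 1)
    (hκ : κ = if 2 ≤ p then p - 1 else (2 : ℝ) ^ (2 - p) * (3 - p))
    (hκ' : κ' = if 2 ≤ p then min (2⁻¹ : ℝ) ((2 : ℝ) ^ (2 - p)) else p - 1)
    (k : EuclideanSpace ℝ (Fin d) → EuclideanSpace ℝ (Fin d) → ℝ)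
    (hk : Measurable fun z : EuclideanSpace ℝ (Fin d) × EuclideanSpace ℝ (Fin d) => k z.1 z.2)
    (hk0 : ∀ x y, 0 ≤ k x y)
    (u v : EuclideanSpace ℝ (Fin d) → ℝ) (hu : Measurable u) (hv : Measurable v)
    (hEu : Integrable fun z : EuclideanSpace ℝ (Fin d) × EuclideanSpace ℝ (Fin d) =>
      |u z.1 - u z.2| ^ p * k z.1 z.2)
    (hEv : Integrable fun z : EuclideanSpace ℝ (Fin d) × EuclideanSpace ℝ (Fin d) =>
      |v z.1 - v z.2| ^ p * k z.1 z.2)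
    (hS : 0 < nlDiag d p k u + nlDiag d p k v) :
    0 ≤ nlForm d p k u (u - v) - nlForm d p k v (u - v) ∧
    (nlForm d p k u (u - v) - nlForm d p k v (u - v)) ^ (α + 1) /
        (nlDiag d p k u + nlDiag d p k v) ^ α ≤
      (2 : ℝ) ^ (p * α) * κ ^ (α + 1) * nlDiag d p k (u - v) ∧
    (2 : ℝ) ^ (p * β) * κ' ^ (β + 1) * nlDiag d p k (u - v) ≤
      (nlForm d p k u (u - v) - nlForm d p k v (u - v)) ^ (β + 1) /
        (nlDiag d p k u + nlDiag d p k v) ^ β := by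
  have hp₀ : 0 < p := by linarith
  subst hα hβ hκ hκ'
  simp only [nlForm_eq_dualityForm hk hk0, nlDiag_eq_lpEnergy hk hk0, increment_sub,
    sub_add_cancel] at hS ⊢
  obtain ⟨hD, hupper, hlower⟩ := stmt_9_general hp (memLp_increment hp₀ hk hk0 hu hEu)
    (memLp_increment hp₀ hk hk0 hv hEv) hS
  exact ⟨hD,
    hupper.trans (mul_le_mul_of_nonneg_right (max_rpow_le_upper_constant hp) lpEnergy_nonneg),
    (mul_le_mul_of_nonneg_right (lower_constant_le_min_rpow hp) lpEnergy_nonneg).trans hlower⟩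
end

section
/- Let $d \ge 1$ and $p \in (1,\infty)$. There exists a constant $c > 0$, depending only on $d$ and $p$, with the following property. Let $\rho : [0,\infty) \to [0,\infty)$ be measurable, set $\nu(h) = \rho(|h|)$ for $h \in \mathbb{R}^d$, and assume $A := \int_{\mathbb{R}^d}(1 \wedge |h|^p)\,\nu(h)\,dh < \infty$. Let $x \in \mathbb{R}^d$ and let $u : \mathbb{R}^d \to \mathbb{R}$ be bounded and measurable, twice continuously differentiable on the open ball $B(x,1)$, with $N := \sup_{y \in B(x,1)}\big(|u(y)| + |\nabla u(y)| + \|D^2 u(y)\|\big) < \infty$; if $1 < p < 2$ assume in addition $\nabla u(x) \ne 0$. Then for every $\delta \in (0,1]$ the function $y \mapsto |u(x)-u(y)|^{p-2}(u(x)-u(y))\,\nu(x-y)$ is integrable on $\{y : |y-x| \ge \delta\}$, the principal-value limit $L u(x) := \lim_{\delta \to 0^+} 2\int_{\{|y-x| \ge \delta\}} |u(x)-u(y)|^{p-2}(u(x)-u(y))\,\nu(x-y)\,dy$ exists in $\mathbb{R}$, and $|L u(x)| \le c\,\Big( N\, |\nabla u(x)|^{p-2} + N^{\max(1,\,p-1)}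 + \|u\|_{L^\infty(\mathbb{R}^d)}^{p-1} \Big)\, A$. -/
open MeasureTheory Filter
open scoped Topology

/-!
Put `ℓ = -Du(x)`, so that Taylor's formula reads `u(x) - u(x + h) = ℓ(h) + O(N|h|²)` for `|h| < 1`.
On the unit ball the integrand with `ℓ(h)` in place of `u(x) - u(x + h)` is odd in `h`, hence
disappears from every truncated integral. What remains is absolutely integrable, because
`t ↦ |t|^(p-2) t` satisfies
`||a + b|^(p-2) (a + b) - |a|^(p-2) a| ≤ C (|b| |a|^(p-2) + |b|^max(1, p-1))`,
which for `a = ℓ(h)` and `b = O(N|h|²)` is at most `C (N |ℓ(h/|h|)|^(p-2) + N^max(1, p-1)) |h|^p`.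
For `p < 2` the factor `|ℓ(h/|h|)|^(p-2)` blows up on the kernel of `ℓ`, but `p - 2 > -1` makes its
mean over the sphere finite. That mean is the same for every radial weight, and for the weight
`|h|^(p-2) exp(-|h|²)` it becomes the Gaussian moment of order `p - 2` of one coordinate.
-/

section SignedPow

/-- The odd power `t ↦ |t| ^ (p - 2) * t`, of degree `p - 1`, which is the nonlinearity of the
`p`-Lévy operator. -/
noncomputable def signedPow (p t : ℝ) : ℝ := |t| ^ (p - 2) * t

variable {p : ℝ}

lemma measurable_signedPow (p : ℝ) : Measurable (signedPow p) := by
  unfold signedPow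
  fun_prop

lemma signedPow_zero (p : ℝ) : signedPow p 0 = 0 := mul_zero _

lemma signedPow_neg (p t : ℝ) : signedPow p (-t) = -signedPow p t := by simp [signedPow]

lemma signedPow_mul (p s t : ℝ) : signedPow p (s * t) = signedPow p s * signedPow p t := by
  simp only [signedPow, abs_mul, Real.mul_rpow (abs_nonneg s) (abs_nonneg t)]
  ring

lemma abs_signedPow (hp : p ≠ 1) (t : ℝ) : |signedPow p t| = |t| ^ (p - 1) := by
  rw [signedPow, abs_mul, abs_of_nonneg (by positivity),
    ← Real.rpow_add_one' (abs_nonneg t) (by contrapose! hp; linarith)]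
  ring_nf

lemma signedPow_of_pos {t : ℝ} (ht : 0 < t) : signedPow p t = t ^ (p - 1) := by
  rw [signedPow, abs_of_pos ht, ← Real.rpow_add_one ht.ne']
  ring_nf

lemma abs_signedPow_sub_one_le_of_le_two (hp : 1 < p) (hp2 : p ≤ 2) (t : ℝ) :
    |signedPow p t - 1| ≤ 2 * |t - 1| := by
  rcases le_or_gt t 0 with ht | ht
  · have h_pow : |t| ^ (p - 1) ≤ 1 - t := calc
      |t| ^ (p - 1) ≤ (1 + |t|) ^ (p - 1) := by gcongr; linarith
      _ ≤ (1 + |t|) ^ (1 : ℝ) :=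
        Real.rpow_le_rpow_of_exponent_le (by linarith [abs_nonneg t]) (by linarith)
      _ = 1 - t := by rw [Real.rpow_one, abs_of_nonpos ht, sub_eq_add_neg]
    calc |signedPow p t - 1| ≤ |signedPow p t| + |1| := abs_sub _ _
      _ ≤ 2 * |t - 1| := by
        rw [abs_signedPow hp.ne', abs_one, abs_of_neg (by linarith : t - 1 < 0)]
        linarith
  · rw [signedPow_of_pos ht]
    rcases le_total t 1 with ht1 | ht1
    · have h_one : t ^ (p - 1) ≤ 1 := Real.rpow_le_one ht.le ht1 (by linarith)
      have h_self : t ≤ t ^ (p - 1) := Real.self_le_rpow_of_le_one ht.le ht1 (by linarith)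
      rw [abs_of_nonpos (by linarith), abs_of_nonpos (by linarith)]
      linarith
    · have h_one : 1 ≤ t ^ (p - 1) := Real.one_le_rpow ht1 (by linarith)
      have h_self : t ^ (p - 1) ≤ t := Real.rpow_le_self_of_one_le ht1 (by linarith)
      rw [abs_of_nonneg (by linarith), abs_of_nonneg (by linarith)]
      linarith

lemma abs_signedPow_add_sub_le_of_le_two (hp : 1 < p) (hp2 : p ≤ 2) {a : ℝ} (ha : a ≠ 0)
    (b : ℝ) : |signedPow p (a + b) - signedPow p a| ≤ 2 * (|b| * |a| ^ (p - 2)) := by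
  have h_factor : signedPow p (a + b) - signedPow p a =
      signedPow p a * (signedPow p ((a + b) / a) - 1) := by
    rw [mul_sub_one, ← signedPow_mul, mul_div_cancel₀ _ ha]
  calc |signedPow p (a + b) - signedPow p a|
      ≤ |signedPow p a| * (2 * |(a + b) / a - 1|) := by
        rw [h_factor, abs_mul]
        gcongr
        exact abs_signedPow_sub_one_le_of_le_two hp hp2 _
    _ = 2 * (|b| * |a| ^ (p - 2)) := by
        rw [add_div, div_self ha, add_sub_cancel_left, abs_div, signedPow, abs_mul,
          abs_of_nonneg (by positivity : 0 ≤ |a| ^ (p - 2))]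
        field_simp

lemma hasDerivAt_signedPow (hp : 2 ≤ p) (t : ℝ) :
    HasDerivAt (signedPow p) ((p - 1) * |t| ^ (p - 2)) t := by
  rcases hp.eq_or_lt with rfl | hp
  · have h_id : signedPow 2 = id := funext fun s => by simp [signedPow]
    rw [h_id]
    simpa [show (2 : ℝ) - 1 = 1 by norm_num] using hasDerivAt_id t
  rcases eq_or_ne t 0 with rfl | ht
  · rw [hasDerivAt_iff_tendsto_slope_zero, abs_zero, Real.zero_rpow (by linarith), mul_zero]
    have h_cont : ContinuousAt (fun s : ℝ => |s| ^ (p - 2)) 0 :=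
      continuous_abs.continuousAt.rpow_const (Or.inr (by linarith))
    have h_lim : Tendsto (fun s : ℝ => |s| ^ (p - 2)) (𝓝[≠] 0) (𝓝 0) := by
      simpa [Real.zero_rpow (by linarith : p - 2 ≠ 0)] using
        h_cont.tendsto.mono_left nhdsWithin_le_nhds
    refine h_lim.congr' ?_
    filter_upwards [self_mem_nhdsWithin] with s (hs : s ≠ 0)
    rw [zero_add, signedPow_zero, sub_zero, signedPow, smul_eq_mul]
    field_simp
  · have h_abs := ((hasDerivAt_abs ht).rpow_const (p := p - 2) (Or.inl (abs_ne_zero.2 ht))).mul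
      (hasDerivAt_id t)
    refine h_abs.congr_deriv ?_
    have h_sign : (SignType.sign t : ℝ) * t = |t| := sign_mul_self t
    rw [Real.rpow_sub_one (abs_ne_zero.2 ht), id_eq, mul_right_comm _ _ t, mul_right_comm _ _ t,
      h_sign]
    field_simp
    ring

lemma add_rpow_le_two_rpow_mul {a b q : ℝ} (ha : 0 ≤ a) (hb : 0 ≤ b) (hq : 0 ≤ q) :
    (a + b) ^ q ≤ 2 ^ q * (a ^ q + b ^ q) := by
  calc (a + b) ^ q ≤ (2 * max a b) ^ q := by
        gcongr
        linarith [le_max_left a b, le_max_right a b]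
    _ = 2 ^ q * max (a ^ q) (b ^ q) := by
        rw [Real.mul_rpow zero_le_two (le_max_of_le_left ha), Real.rpow_max ha hb hq]
    _ ≤ 2 ^ q * (a ^ q + b ^ q) := by
        gcongr
        exact max_le_add_of_nonneg (by positivity) (by positivity)

lemma abs_signedPow_add_sub_le_of_two_le (hp : 2 ≤ p) (a b : ℝ) :
    |signedPow p (a + b) - signedPow p a| ≤
      (p - 1) * 2 ^ (p - 2) * (|b| * |a| ^ (p - 2) + |b| ^ (p - 1)) := by
  have h_deriv : ∀ t ∈ Metric.closedBall 0 (|a| + |b|),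
      ‖(p - 1) * |t| ^ (p - 2)‖ ≤ (p - 1) * (|a| + |b|) ^ (p - 2) := by
    intro t ht
    rw [mem_closedBall_zero_iff, Real.norm_eq_abs] at ht
    have : 0 ≤ p - 1 := by linarith
    rw [Real.norm_of_nonneg (by positivity)]
    gcongr
  have h_mvt := (convex_closedBall 0 (|a| + |b|)).norm_image_sub_le_of_norm_hasDerivWithin_le
    (fun t _ => (hasDerivAt_signedPow hp t).hasDerivWithinAt) h_deriv
    (mem_closedBall_zero_iff.2 (by simp) : a ∈ _)
    (mem_closedBall_zero_iff.2 (abs_add_le a b) : a + b ∈ _)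
  have h_pow : |b| ^ (p - 1) = |b| * |b| ^ (p - 2) := by
    rw [mul_comm, ← Real.rpow_add_one' (abs_nonneg b) (by linarith)]
    ring_nf
  rw [add_sub_cancel_left, Real.norm_eq_abs, Real.norm_eq_abs] at h_mvt
  calc |signedPow p (a + b) - signedPow p a| ≤ (p - 1) * (|a| + |b|) ^ (p - 2) * |b| := h_mvt
    _ ≤ (p - 1) * (2 ^ (p - 2) * (|a| ^ (p - 2) + |b| ^ (p - 2))) * |b| := by
        gcongr
        · linarith
        · exact add_rpow_le_two_rpow_mul (abs_nonneg a) (abs_nonneg b) (by linarith)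
    _ = (p - 1) * 2 ^ (p - 2) * (|b| * |a| ^ (p - 2) + |b| ^ (p - 1)) := by
        rw [h_pow]
        ring

lemma abs_signedPow_add_sub_le (hp : 1 < p) {a : ℝ} (ha : p < 2 → a ≠ 0) (b : ℝ) :
    |signedPow p (a + b) - signedPow p a| ≤
      p * 2 ^ p * (|b| * |a| ^ (p - 2) + |b| ^ max 1 (p - 1)) := by
  rcases lt_or_ge p 2 with hp2 | hp2
  · have h_two : 2 ≤ p * 2 ^ p := calc
      (2 : ℝ) ≤ 2 ^ p := Real.self_le_rpow_of_one_le one_le_two hp.le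
      _ ≤ p * 2 ^ p := le_mul_of_one_le_left (by positivity) hp.le
    calc |signedPow p (a + b) - signedPow p a| ≤ 2 * (|b| * |a| ^ (p - 2)) :=
          abs_signedPow_add_sub_le_of_le_two hp hp2.le (ha hp2) b
      _ ≤ p * 2 ^ p * (|b| * |a| ^ (p - 2) + |b| ^ max 1 (p - 1)) := by
          gcongr
          exact le_add_of_nonneg_right (by positivity)
  · rw [max_eq_right (by linarith)]
    refine (abs_signedPow_add_sub_le_of_two_le hp2 a b).trans ?_
    gcongr
    · linarith
    · exact one_le_two
    · linarith

end SignedPow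

section Angular

open Module

lemma lintegral_angular_mul_radial {E : Type*} [NormedAddCommGroup E] [NormedSpace ℝ E]
    [FiniteDimensional ℝ E] [Nontrivial E] [MeasurableSpace E] [BorelSpace E] (μ : Measure E)
    [μ.IsAddHaarMeasure] {φ : E → ENNReal} (hφ : Measurable φ) {w : ℝ → ENNReal}
    (hw : Measurable w) :
    ∫⁻ h, φ (‖h‖⁻¹ • h) * w ‖h‖ ∂μ =
      (∫⁻ ω, φ ω ∂μ.toSphere) * ∫⁻ r, w r ∂Measure.volumeIoiPow (finrank ℝ E - 1) := by
  rw [← lintegral_prod_mul (f := fun ω : Metric.sphere (0 : E) 1 => φ ω)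
      (g := fun r : Set.Ioi (0 : ℝ) => w r) (by fun_prop) (by fun_prop),
    ← μ.measurePreserving_homeomorphUnitSphereProd.lintegral_comp_emb
      (Homeomorph.measurableEmbedding _)]
  simp only [homeomorphUnitSphereProd_apply_snd_coe, homeomorphUnitSphereProd_apply_fst_coe]
  rw [lintegral_subtype_comap (measurableSet_singleton _).compl
    (fun h => φ (‖h‖⁻¹ • h) * w ‖h‖), restrict_compl_singleton]

lemma lintegral_angular_mul_radial_mul_comm {E : Type*} [NormedAddCommGroup E] [NormedSpace ℝ E]
    [FiniteDimensional ℝ E] [Nontrivial E] [MeasurableSpace E] [BorelSpace E] (μ : Measure E)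
    [μ.IsAddHaarMeasure] {φ : E → ENNReal} (hφ : Measurable φ) {v w : ℝ → ENNReal}
    (hv : Measurable v) (hw : Measurable w) :
    (∫⁻ h, φ (‖h‖⁻¹ • h) * v ‖h‖ ∂μ) * ∫⁻ h, w ‖h‖ ∂μ =
      (∫⁻ h, φ (‖h‖⁻¹ • h) * w ‖h‖ ∂μ) * ∫⁻ h, v ‖h‖ ∂μ := by
  have h_radial {f : ℝ → ENNReal} (hf : Measurable f) :=
    lintegral_angular_mul_radial μ (measurable_const (a := (1 : ENNReal))) hf
  simp only [one_mul] at h_radial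
  rw [lintegral_angular_mul_radial μ hφ hv, lintegral_angular_mul_radial μ hφ hw, h_radial hv,
    h_radial hw]
  ring

lemma abs_apply_inv_norm_smul_rpow_mul_norm_rpow {E : Type*} [NormedAddCommGroup E]
    [NormedSpace ℝ E] (ℓ : E →L[ℝ] ℝ) (q : ℝ) (h : E) :
    |ℓ (‖h‖⁻¹ • h)| ^ q * ‖h‖ ^ q = |ℓ h| ^ q := by
  rw [← Real.mul_rpow (abs_nonneg _) (norm_nonneg h), map_smul, smul_eq_mul, abs_mul, abs_inv,
    abs_norm]
  rcases eq_or_ne h 0 with rfl | hh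
  · simp
  · rw [mul_right_comm, inv_mul_cancel₀ (norm_ne_zero_iff.2 hh), one_mul]

lemma integrable_abs_rpow_mul_exp_neg_sq {q : ℝ} (hq : -1 < q) :
    Integrable fun t : ℝ => |t| ^ q * Real.exp (-t ^ 2) := by
  have h_half := integrableOn_rpow_mul_exp_neg_mul_sq one_pos hq
  have h_abs := (integrable_fun_norm_addHaar (volume : Measure ℝ)
    (f := fun r => r ^ q * Real.exp (-1 * r ^ 2))).2 (by simpa using h_half)
  simpa using h_abs

lemma integrable_abs_coord_rpow_mul_exp_neg_norm_sq {ι : Type*} [Fintype ι] {q : ℝ}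
    (hq : -1 < q) (i : ι) :
    Integrable fun h : EuclideanSpace ℝ ι => |h i| ^ q * Real.exp (-‖h‖ ^ 2) := by
  classical
  have h_factor (j : ι) :
      Integrable fun t : ℝ => (if j = i then |t| ^ q else 1) * Real.exp (-t ^ 2) := by
    split_ifs
    · exact integrable_abs_rpow_mul_exp_neg_sq hq
    · simpa using integrable_exp_neg_mul_sq one_pos
  have h_prod := (PiLp.volume_preserving_ofLp ι).integrable_comp_of_integrable
    (Integrable.fintype_prod (μ := fun _ => volume) h_factor)
  refine h_prod.congr (Eventually.of_forall fun h => ?_)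
  simp only [Function.comp_apply, Finset.prod_mul_distrib, ← Real.exp_sum,
    Finset.prod_ite_eq', Finset.mem_univ, if_true, EuclideanSpace.norm_sq_eq, Real.norm_eq_abs,
    sq_abs, Finset.sum_neg_distrib]

lemma lintegral_rpow_mul_gaussian_norm_ne_zero {E : Type*} [NormedAddCommGroup E]
    [NormedSpace ℝ E] [FiniteDimensional ℝ E] [Nontrivial E] [MeasurableSpace E] [BorelSpace E]
    (μ : Measure E) [μ.IsAddHaarMeasure] (q : ℝ) :
    ∫⁻ h, ENNReal.ofReal (‖h‖ ^ q * Real.exp (-‖h‖ ^ 2)) ∂μ ≠ 0 := by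
  intro h_zero
  rw [lintegral_eq_zero_iff (by fun_prop)] at h_zero
  obtain ⟨h, h_eq, h_ne⟩ := (h_zero.and (Measure.ae_ne μ 0)).exists
  have h_pos : 0 < ‖h‖ ^ q * Real.exp (-‖h‖ ^ 2) := by positivity
  exact (ENNReal.ofReal_pos.2 h_pos).ne' h_eq

lemma exists_unit_forall_apply_eq_norm_mul_inner {E : Type*} [NormedAddCommGroup E]
    [InnerProductSpace ℝ E] [CompleteSpace E] [Nontrivial E] (ℓ : E →L[ℝ] ℝ) :
    ∃ e : E, ‖e‖ = 1 ∧ ∀ h, ℓ h = ‖ℓ‖ * inner ℝ e h := by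
  rcases eq_or_ne ℓ 0 with rfl | hℓ
  · obtain ⟨e, he⟩ := exists_norm_eq E zero_le_one
    exact ⟨e, he, by simp⟩
  · set g := (InnerProductSpace.toDual ℝ E).symm ℓ
    have hg_norm : ‖g‖ = ‖ℓ‖ := LinearIsometryEquiv.norm_map _ _
    have hℓ_norm : ‖ℓ‖ ≠ 0 := norm_ne_zero_iff.2 hℓ
    refine ⟨‖ℓ‖⁻¹ • g, by rw [norm_smul, norm_inv, norm_norm, hg_norm, inv_mul_cancel₀ hℓ_norm],
      fun h => ?_⟩
    rw [real_inner_smul_left, mul_inv_cancel_left₀ hℓ_norm, InnerProductSpace.toDual_symm_apply]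

variable {E : Type*} [NormedAddCommGroup E] [InnerProductSpace ℝ E] [FiniteDimensional ℝ E]
  [MeasurableSpace E] [BorelSpace E]

lemma lintegral_inner_norm_eq_lintegral_coord_norm {e : E} (he : ‖e‖ = 1)
    (i : Fin (finrank ℝ E)) (F : ℝ → ℝ → ENNReal) :
    ∫⁻ h, F (inner ℝ e h) ‖h‖ =
      ∫⁻ y : EuclideanSpace ℝ (Fin (finrank ℝ E)), F (y i) ‖y‖ := by
  obtain ⟨b, hb⟩ := Orthonormal.exists_orthonormalBasis_extension_of_card_eq (𝕜 := ℝ)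
    (E := E) (ι := Fin (finrank ℝ E)) (by simp) (v := fun _ => e) (s := {i})
    (by simpa [orthonormal_iff_ite] using he)
  rw [← b.measurePreserving_repr.lintegral_comp_emb b.repr.toHomeomorph.measurableEmbedding]
  refine lintegral_congr fun h => ?_
  rw [b.repr_apply_apply, hb i rfl, b.repr.norm_map]

lemma exists_lintegral_abs_inner_rpow_mul_radial_le [Nontrivial E] {q : ℝ} (hq : -1 < q) :
    ∃ K : ENNReal, K ≠ ⊤ ∧ ∀ e : E, ‖e‖ = 1 → ∀ w : ℝ → ENNReal, Measurable w →
      ∫⁻ h : E, w ‖h‖ ≠ ⊤ →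
      ∫⁻ h, ENNReal.ofReal (|inner ℝ e (‖h‖⁻¹ • h)| ^ q) * w ‖h‖ ≤ K * ∫⁻ h : E, w ‖h‖ := by
  let gaussian (r : ℝ) : ENNReal := ENNReal.ofReal (r ^ q * Real.exp (-r ^ 2))
  let i : Fin (finrank ℝ E) := ⟨0, finrank_pos⟩
  let G := ∫⁻ y : EuclideanSpace ℝ (Fin (finrank ℝ E)),
    ENNReal.ofReal (|y i| ^ q * Real.exp (-‖y‖ ^ 2))
  have hG : G ≠ ⊤ := (integrable_abs_coord_rpow_mul_exp_neg_norm_sq hq i).lintegral_lt_top.ne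
  have h_gaussian : ∫⁻ h : E, gaussian ‖h‖ ≠ 0 :=
    lintegral_rpow_mul_gaussian_norm_ne_zero volume q
  have h_moment (e : E) (he : ‖e‖ = 1) :
      ∫⁻ h, ENNReal.ofReal (|inner ℝ e (‖h‖⁻¹ • h)| ^ q) * gaussian ‖h‖ = G := by
    refine Eq.trans (lintegral_congr fun h => ?_) (lintegral_inner_norm_eq_lintegral_coord_norm he i
      fun s r => ENNReal.ofReal (|s| ^ q * Real.exp (-r ^ 2)))
    rw [← ENNReal.ofReal_mul (by positivity), ← mul_assoc]
    congr 2
    exact abs_apply_inv_norm_smul_rpow_mul_norm_rpow (innerSL ℝ e) q h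
  refine ⟨G / ∫⁻ h : E, gaussian ‖h‖, ENNReal.div_ne_top hG h_gaussian, ?_⟩
  intro e he w hw hw_top
  rw [← ENNReal.mul_div_right_comm, ENNReal.le_div_iff_mul_le (Or.inl h_gaussian)
    (Or.inr (ENNReal.mul_ne_top hG hw_top)), lintegral_angular_mul_radial_mul_comm volume
    (φ := fun v => ENNReal.ofReal (|inner ℝ e v| ^ q)) (by fun_prop) hw (w := gaussian)
    (by fun_prop), h_moment e he]

lemma exists_integral_abs_apply_rpow_mul_radial_le [Nontrivial E] {q : ℝ} (hq : -1 < q) :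
    ∃ K : ℝ, 0 ≤ K ∧ ∀ (ℓ : E →L[ℝ] ℝ) (w : ℝ → ℝ), Measurable w → (∀ r, 0 ≤ r → 0 ≤ w r) →
      Integrable (fun h : E => w ‖h‖) →
      Integrable (fun h : E => |ℓ (‖h‖⁻¹ • h)| ^ q * w ‖h‖) ∧
      ∫ h : E, |ℓ (‖h‖⁻¹ • h)| ^ q * w ‖h‖ ≤ K * ‖ℓ‖ ^ q * ∫ h : E, w ‖h‖ := by
  obtain ⟨K, hK, h_unit⟩ := exists_lintegral_abs_inner_rpow_mul_radial_le (E := E) hq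
  refine ⟨K.toReal, ENNReal.toReal_nonneg, fun ℓ w hw hw0 hw_int => ?_⟩
  obtain ⟨e, he, hℓ⟩ := exists_unit_forall_apply_eq_norm_mul_inner ℓ
  have h_scale (h : E) : |ℓ (‖h‖⁻¹ • h)| ^ q * w ‖h‖ =
      ‖ℓ‖ ^ q * (|inner ℝ e (‖h‖⁻¹ • h)| ^ q * w ‖h‖) := by
    rw [hℓ, abs_mul, abs_norm, Real.mul_rpow (norm_nonneg ℓ) (abs_nonneg _), mul_assoc]
  have h_nonneg (h : E) : 0 ≤ |inner ℝ e (‖h‖⁻¹ • h)| ^ q * w ‖h‖ :=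
    mul_nonneg (by positivity) (hw0 _ (norm_nonneg h))
  have hw_top := hw_int.lintegral_lt_top.ne
  have h_le := h_unit e he (fun r => ENNReal.ofReal (w r)) (by fun_prop) hw_top
  simp_rw [← ENNReal.ofReal_mul (Real.rpow_nonneg (abs_nonneg _) q)] at h_le
  have h_int : Integrable fun h : E => |inner ℝ e (‖h‖⁻¹ • h)| ^ q * w ‖h‖ := by
    refine ⟨by fun_prop, ?_⟩
    rw [hasFiniteIntegral_iff_ofReal (Eventually.of_forall h_nonneg)]
    exact h_le.trans_lt (ENNReal.mul_lt_top hK.lt_top hw_top.lt_top)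
  simp_rw [h_scale]
  refine ⟨h_int.const_mul _, ?_⟩
  rw [integral_const_mul, mul_comm K.toReal, mul_assoc]
  gcongr
  rw [integral_eq_lintegral_of_nonneg_ae (Eventually.of_forall h_nonneg) h_int.1,
    integral_eq_lintegral_of_nonneg_ae (Eventually.of_forall fun h => hw0 _ (norm_nonneg h))
      hw_int.1, ← ENNReal.toReal_mul]
  exact ENNReal.toReal_mono (ENNReal.mul_ne_top hK hw_top) h_le

end Angular

section PrincipalValue

lemma setIntegral_eq_zero_of_odd {G F : Type*} [AddGroup G] [MeasurableSpace G]
    [MeasurableNeg G] {μ : Measure G} [μ.IsNegInvariant] [NormedAddCommGroup F] [NormedSpace ℝ F]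
    {s : Set G} (hs : -s = s) {f : G → F} (hf : ∀ h, f (-h) = -f h) : ∫ h in s, f h ∂μ = 0 := by
  have : IsAddTorsionFree F := .of_isTorsionFree ℝ F
  have h_neg := (Measure.measurePreserving_neg μ).setIntegral_preimage_emb
    (MeasurableEquiv.neg G).measurableEmbedding f s
  rw [Set.neg_preimage, hs] at h_neg
  simp only [hf, integral_neg] at h_neg
  exact self_eq_neg.1 h_neg.symm

variable {E : Type*} [NormedAddCommGroup E] [MeasurableSpace E] [BorelSpace E] {μ : Measure E}

lemma aecover_setOf_le_norm [NullSingletonClass μ] :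
    AECover μ (𝓝[>] 0) fun δ : ℝ => {h : E | δ ≤ ‖h‖} where
  ae_eventually_mem := by
    filter_upwards [Measure.ae_ne μ 0] with h hh
    filter_upwards [nhdsWithin_le_nhds (Iio_mem_nhds (norm_pos_iff.2 hh))] with δ hδ
    exact hδ.le
  measurableSet δ := measurableSet_le measurable_const measurable_norm

lemma tendsto_setIntegral_le_norm_of_odd_add [NullSingletonClass μ] [μ.IsNegInvariant]
    {F : Type*} [NormedAddCommGroup F] [NormedSpace ℝ F] {f g : E → F}
    (hf : ∀ h, f (-h) = -f h) (hf_int : ∀ δ : ℝ, 0 < δ → IntegrableOn f {h | δ ≤ ‖h‖} μ)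
    (hg : Integrable g μ) :
    Tendsto (fun δ : ℝ => ∫ h in {h | δ ≤ ‖h‖}, f h + g h ∂μ) (𝓝[>] 0) (𝓝 (∫ h, g h ∂μ)) := by
  refine (aecover_setOf_le_norm.integral_tendsto_of_countably_generated hg).congr' ?_
  filter_upwards [self_mem_nhdsWithin] with δ hδ
  have h_symm : -{h : E | δ ≤ ‖h‖} = {h | δ ≤ ‖h‖} := by ext; simp
  rw [integral_add (hf_int δ hδ) hg.integrableOn, setIntegral_eq_zero_of_odd h_symm hf, zero_add]

end PrincipalValue

lemma ae_apply_ne_zero {E : Type*} [NormedAddCommGroup E] [NormedSpace ℝ E]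
    [FiniteDimensional ℝ E] [MeasurableSpace E] [BorelSpace E] (μ : Measure E)
    [μ.IsAddHaarMeasure] {ℓ : E →L[ℝ] ℝ} (hℓ : ℓ ≠ 0) : ∀ᵐ h ∂μ, ℓ h ≠ 0 := by
  have h_ker : LinearMap.ker ℓ.toLinearMap ≠ ⊤ := by
    rw [Ne, LinearMap.ker_eq_top]
    exact_mod_cast hℓ
  exact measure_eq_zero_iff_ae_notMem.1 (Measure.addHaar_submodule μ _ h_ker)

lemma norm_sub_sub_fderiv_le {E F : Type*} [NormedAddCommGroup E] [NormedSpace ℝ E]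
    [NormedAddCommGroup F] [NormedSpace ℝ F] {u : E → F} {x h : E} {r N : ℝ}
    (hu : ContDiffOn ℝ 2 u (Metric.ball x r))
    (hN : ∀ y ∈ Metric.ball x r, ‖fderiv ℝ (fderiv ℝ u) y‖ ≤ N) (hh : ‖h‖ < r) :
    ‖u (x + h) - u x - fderiv ℝ u x h‖ ≤ N * ‖h‖ ^ 2 := by
  have hx : x ∈ Metric.ball x r := Metric.mem_ball_self ((norm_nonneg h).trans_lt hh)
  have hN0 : 0 ≤ N := (norm_nonneg (fderiv ℝ (fderiv ℝ u) x)).trans (hN x hx)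
  have hu_at {y : E} (hy : y ∈ Metric.ball x r) : ContDiffAt ℝ 2 u y :=
    hu.contDiffAt (Metric.isOpen_ball.mem_nhds hy)
  have h_sub : Metric.closedBall x ‖h‖ ⊆ Metric.ball x r := Metric.closedBall_subset_ball hh
  have h_fderiv : ∀ y ∈ Metric.closedBall x ‖h‖, ‖fderiv ℝ u y - fderiv ℝ u x‖ ≤ N * ‖h‖ := by
    intro y hy
    calc ‖fderiv ℝ u y - fderiv ℝ u x‖ ≤ N * ‖y - x‖ :=
          (convex_ball x r).norm_image_sub_le_of_norm_fderiv_le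
            (fun z hz => ((hu_at hz).fderiv_right (m := 1) (by norm_num)).differentiableAt
              one_ne_zero) hN hx (h_sub hy)
      _ ≤ N * ‖h‖ := by
          gcongr
          exact mem_closedBall_iff_norm.1 hy
  have h_mvt := (convex_closedBall x ‖h‖).norm_image_sub_le_of_norm_fderiv_le'
    (fun y hy => (hu_at (h_sub hy)).differentiableAt two_ne_zero) h_fderiv
    (Metric.mem_closedBall_self (norm_nonneg h)) (by simp : x + h ∈ _)
  rwa [add_sub_cancel_left, mul_assoc, ← sq] at h_mvt

section Levy

/-- The weight `r ↦ (1 ∧ r ^ p) ρ r`, whose integrability along the norm says that `ρ` is the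
profile of a radial `p`-Lévy kernel. -/
noncomputable def levyWeight (p : ℝ) (ρ : ℝ → ℝ) (r : ℝ) : ℝ := min 1 (r ^ p) * ρ r

variable {p : ℝ} {ρ : ℝ → ℝ}

lemma measurable_levyWeight (hρ : Measurable ρ) : Measurable (levyWeight p ρ) := by
  unfold levyWeight
  fun_prop

lemma levyWeight_nonneg (hρ : ∀ r, 0 ≤ ρ r) {r : ℝ} (hr : 0 ≤ r) : 0 ≤ levyWeight p ρ r :=
  mul_nonneg (le_min zero_le_one (by positivity)) (hρ r)

lemma levyWeight_of_le_one (hp : 0 ≤ p) {r : ℝ} (hr0 : 0 ≤ r) (hr : r ≤ 1) :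
    levyWeight p ρ r = r ^ p * ρ r := by
  rw [levyWeight, min_eq_right (Real.rpow_le_one hr0 hr hp)]

lemma levyWeight_of_one_le (hp : 0 ≤ p) {r : ℝ} (hr : 1 ≤ r) : levyWeight p ρ r = ρ r := by
  rw [levyWeight, min_eq_left (Real.one_le_rpow hr hp), one_mul]

lemma integrableOn_bdd_mul_of_integrable_levyWeight {E : Type*} [NormedAddCommGroup E]
    [MeasurableSpace E] [BorelSpace E] {μ : Measure E} (hp : 0 ≤ p) (hρ : Measurable ρ)
    (hρ0 : ∀ r, 0 ≤ ρ r) (hA : Integrable (fun h : E => levyWeight p ρ ‖h‖) μ) {f : E → ℝ}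
    (hf : Measurable f) {B : ℝ} (hB : ∀ h, |f h| ≤ B) {δ : ℝ} (hδ : 0 < δ) :
    IntegrableOn (fun h => f h * ρ ‖h‖) {h | δ ≤ ‖h‖} μ := by
  have hδ_min : 0 < min 1 (δ ^ p) := lt_min one_pos (by positivity)
  have h_kernel : IntegrableOn (fun h : E => ρ ‖h‖) {h | δ ≤ ‖h‖} μ := by
    refine (hA.const_mul (min 1 (δ ^ p))⁻¹).integrableOn.mono'
      (hρ.comp measurable_norm).aestronglyMeasurable ?_
    refine (ae_restrict_iff' (measurableSet_le measurable_const measurable_norm)).2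
      (Eventually.of_forall fun h (hh : δ ≤ ‖h‖) => ?_)
    rw [Real.norm_of_nonneg (hρ0 _), levyWeight, ← mul_assoc]
    refine le_mul_of_one_le_left (hρ0 _) ?_
    rw [inv_mul_eq_div, one_le_div hδ_min]
    gcongr
  exact h_kernel.bdd_mul hf.aestronglyMeasurable (Eventually.of_forall hB)

lemma abs_signedPow_sub_signedPow_apply_le {E : Type*} [NormedAddCommGroup E] [NormedSpace ℝ E]
    (hp : 1 < p) {ℓ : E →L[ℝ] ℝ} {h : E} (hh : ‖h‖ ≤ 1) (hℓ : p < 2 → ℓ h ≠ 0) {t N : ℝ}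
    (hN : 0 ≤ N) (ht : |t - ℓ h| ≤ N * ‖h‖ ^ 2) :
    |signedPow p t - signedPow p (ℓ h)| ≤
      p * 2 ^ p * (N * |ℓ (‖h‖⁻¹ • h)| ^ (p - 2) + N ^ max 1 (p - 1)) * ‖h‖ ^ p := by
  have h_main : N * ‖h‖ ^ 2 * |ℓ h| ^ (p - 2) = N * |ℓ (‖h‖⁻¹ • h)| ^ (p - 2) * ‖h‖ ^ p := by
    have h_pow : ‖h‖ ^ p = ‖h‖ ^ (p - 2) * ‖h‖ ^ 2 := by
      rw [← Real.rpow_natCast, ← Real.rpow_add' (norm_nonneg h) (by norm_num; linarith)]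
      norm_num
    rw [← abs_apply_inv_norm_smul_rpow_mul_norm_rpow ℓ (p - 2) h, h_pow]
    ring
  have h_error : (N * ‖h‖ ^ 2) ^ max 1 (p - 1) ≤ N ^ max 1 (p - 1) * ‖h‖ ^ p := by
    rw [Real.mul_rpow hN (by positivity), ← Real.rpow_natCast, ← Real.rpow_mul (norm_nonneg h)]
    gcongr ?_ * ?_
    refine Real.rpow_le_rpow_of_exponent_ge' (norm_nonneg h) hh (by linarith) ?_
    rcases le_total 2 p with hp2 | hp2
    · push_cast; linarith [le_max_right 1 (p - 1)]
    · push_cast; linarith [le_max_left 1 (p - 1)]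
  calc |signedPow p t - signedPow p (ℓ h)|
      ≤ p * 2 ^ p * (|t - ℓ h| * |ℓ h| ^ (p - 2) + |t - ℓ h| ^ max 1 (p - 1)) := by
        simpa using abs_signedPow_add_sub_le hp hℓ (t - ℓ h)
    _ ≤ p * 2 ^ p * (N * ‖h‖ ^ 2 * |ℓ h| ^ (p - 2) + (N * ‖h‖ ^ 2) ^ max 1 (p - 1)) := by
        gcongr
    _ ≤ p * 2 ^ p * (N * |ℓ (‖h‖⁻¹ • h)| ^ (p - 2) + N ^ max 1 (p - 1)) * ‖h‖ ^ p := by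
        rw [h_main, mul_assoc (p * 2 ^ p), add_mul]
        gcongr

section Cancellation

variable {E : Type*} [NormedAddCommGroup E] [NormedSpace ℝ E]

/-- The function `h ↦ signedPow p (ℓ h)` cut off to the unit ball, for `ℓ` the linear part of an
increment: an odd function, whose contribution to the principal value cancels. -/
noncomputable def signedPowOnBall (p : ℝ) (ℓ : E →L[ℝ] ℝ) : E → ℝ :=
  (Metric.ball 0 1).indicator fun h => signedPow p (ℓ h)

lemma signedPowOnBall_of_norm_lt_one (ℓ : E →L[ℝ] ℝ) {h : E} (hh : ‖h‖ < 1) :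
    signedPowOnBall p ℓ h = signedPow p (ℓ h) :=
  Set.indicator_of_mem (mem_ball_zero_iff.2 hh) _

lemma signedPowOnBall_of_one_le_norm (ℓ : E →L[ℝ] ℝ) {h : E} (hh : 1 ≤ ‖h‖) :
    signedPowOnBall p ℓ h = 0 :=
  Set.indicator_of_notMem (by simpa using hh) _

lemma signedPowOnBall_neg (ℓ : E →L[ℝ] ℝ) (h : E) :
    signedPowOnBall p ℓ (-h) = -signedPowOnBall p ℓ h := by
  by_cases hh : ‖h‖ < 1 <;> simp [signedPowOnBall, hh, signedPow_neg]

lemma measurable_signedPowOnBall [MeasurableSpace E] [BorelSpace E] (p : ℝ) (ℓ : E →L[ℝ] ℝ) :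
    Measurable (signedPowOnBall p ℓ) :=
  ((measurable_signedPow p).comp ℓ.measurable).indicator measurableSet_ball

lemma abs_signedPowOnBall_le (hp : 1 < p) (ℓ : E →L[ℝ] ℝ) (h : E) :
    |signedPowOnBall p ℓ h| ≤ ‖ℓ‖ ^ (p - 1) := by
  rcases lt_or_ge ‖h‖ 1 with hh | hh
  · rw [signedPowOnBall_of_norm_lt_one ℓ hh, abs_signedPow hp.ne']
    have := sub_pos.2 hp
    gcongr
    exact ℓ.unit_le_opNorm h hh.le
  · rw [signedPowOnBall_of_one_le_norm ℓ hh, abs_zero]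
    positivity

lemma abs_signedPow_sub_signedPowOnBall_mul_le (hp : 1 < p) (hρ0 : ∀ r, 0 ≤ ρ r)
    {ℓ : E →L[ℝ] ℝ} {h : E} (hℓ : p < 2 → ℓ h ≠ 0) {t B N : ℝ} (hN : 0 ≤ N) (hB : |t| ≤ B)
    (ht : ‖h‖ < 1 → |t - ℓ h| ≤ N * ‖h‖ ^ 2) :
    |(signedPow p t - signedPowOnBall p ℓ h) * ρ ‖h‖| ≤
      p * 2 ^ p * N * (|ℓ (‖h‖⁻¹ • h)| ^ (p - 2) * levyWeight p ρ ‖h‖) +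
        (p * 2 ^ p * N ^ max 1 (p - 1) + B ^ (p - 1)) * levyWeight p ρ ‖h‖ := by
  have hB0 : 0 ≤ B := (abs_nonneg t).trans hB
  have hw : 0 ≤ levyWeight p ρ ‖h‖ := levyWeight_nonneg hρ0 (norm_nonneg h)
  rw [abs_mul, abs_of_nonneg (hρ0 _)]
  rcases lt_or_ge ‖h‖ 1 with hh | hh
  · rw [signedPowOnBall_of_norm_lt_one ℓ hh]
    calc |signedPow p t - signedPow p (ℓ h)| * ρ ‖h‖
        ≤ p * 2 ^ p * (N * |ℓ (‖h‖⁻¹ • h)| ^ (p - 2) + N ^ max 1 (p - 1)) * ‖h‖ ^ p * ρ ‖h‖ := by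
          gcongr
          · exact hρ0 _
          · exact abs_signedPow_sub_signedPow_apply_le hp hh.le hℓ hN (ht hh)
      _ = p * 2 ^ p * N * (|ℓ (‖h‖⁻¹ • h)| ^ (p - 2) * levyWeight p ρ ‖h‖) +
          p * 2 ^ p * N ^ max 1 (p - 1) * levyWeight p ρ ‖h‖ := by
          rw [levyWeight_of_le_one (by linarith) (norm_nonneg h) hh.le]
          ring
      _ ≤ _ := by
          gcongr
          exact le_add_of_nonneg_right (by positivity)
  · have := sub_pos.2 hp
    rw [signedPowOnBall_of_one_le_norm ℓ hh, sub_zero, abs_signedPow hp.ne',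
      ← levyWeight_of_one_le (ρ := ρ) (by linarith : 0 ≤ p) hh]
    calc |t| ^ (p - 1) * levyWeight p ρ ‖h‖ ≤ B ^ (p - 1) * levyWeight p ρ ‖h‖ := by gcongr
      _ ≤ (p * 2 ^ p * N ^ max 1 (p - 1) + B ^ (p - 1)) * levyWeight p ρ ‖h‖ := by
          gcongr
          exact le_add_of_nonneg_left (by positivity)
      _ ≤ _ := le_add_of_nonneg_left (by positivity)

variable [FiniteDimensional ℝ E] [MeasurableSpace E] [BorelSpace E] {μ : Measure E}
  [μ.IsAddHaarMeasure]

lemma integrable_and_abs_integral_signedPow_sub_signedPowOnBall_mul_le (hp : 1 < p)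
    (hρ : Measurable ρ) (hρ0 : ∀ r, 0 ≤ ρ r) (hA : Integrable (fun h => levyWeight p ρ ‖h‖) μ)
    {f : E → ℝ} (hf : Measurable f) {ℓ : E →L[ℝ] ℝ} (hℓ : p < 2 → ℓ ≠ 0)
    (h_ang : Integrable (fun h => |ℓ (‖h‖⁻¹ • h)| ^ (p - 2) * levyWeight p ρ ‖h‖) μ)
    {B N : ℝ} (hN : 0 ≤ N) (hB : ∀ h, |f h| ≤ B)
    (h_lin : ∀ h, ‖h‖ < 1 → |f h - ℓ h| ≤ N * ‖h‖ ^ 2) :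
    Integrable (fun h => (signedPow p (f h) - signedPowOnBall p ℓ h) * ρ ‖h‖) μ ∧
      |∫ h, (signedPow p (f h) - signedPowOnBall p ℓ h) * ρ ‖h‖ ∂μ| ≤
        p * 2 ^ p * N * ∫ h, |ℓ (‖h‖⁻¹ • h)| ^ (p - 2) * levyWeight p ρ ‖h‖ ∂μ +
          (p * 2 ^ p * N ^ max 1 (p - 1) + B ^ (p - 1)) * ∫ h, levyWeight p ρ ‖h‖ ∂μ := by
  have h_ne : ∀ᵐ h ∂μ, p < 2 → ℓ h ≠ 0 := by
    rw [eventually_imp_distrib_left]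
    exact fun hp2 => ae_apply_ne_zero μ (hℓ hp2)
  have h_bound := h_ne.mono fun h hh =>
    abs_signedPow_sub_signedPowOnBall_mul_le hp hρ0 hh hN (hB h) (h_lin h)
  have h_ang_int := h_ang.const_mul (p * 2 ^ p * N)
  have h_weight_int := hA.const_mul (p * 2 ^ p * N ^ max 1 (p - 1) + B ^ (p - 1))
  have h_meas : Measurable fun h => (signedPow p (f h) - signedPowOnBall p ℓ h) * ρ ‖h‖ :=
    (((measurable_signedPow p).comp hf).sub (measurable_signedPowOnBall p ℓ)).mul
      (hρ.comp measurable_norm)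
  have h_dom_int := h_ang_int.fun_add h_weight_int
  refine ⟨h_dom_int.mono' h_meas.aestronglyMeasurable h_bound, ?_⟩
  rw [← integral_const_mul, ← integral_const_mul, ← integral_add h_ang_int h_weight_int]
  exact norm_integral_le_of_norm_le (f := fun h => _ * ρ ‖h‖) h_dom_int h_bound

lemma tendsto_setIntegral_signedPow_mul_radial [Nontrivial E] (hp : 1 < p) (hρ : Measurable ρ)
    (hρ0 : ∀ r, 0 ≤ ρ r) (hA : Integrable (fun h => levyWeight p ρ ‖h‖) μ) {f : E → ℝ}
    {ℓ : E →L[ℝ] ℝ}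
    (h_int : Integrable (fun h => (signedPow p (f h) - signedPowOnBall p ℓ h) * ρ ‖h‖) μ) :
    Tendsto (fun δ : ℝ => ∫ h in {h | δ ≤ ‖h‖}, signedPow p (f h) * ρ ‖h‖ ∂μ) (𝓝[>] 0)
      (𝓝 (∫ h, (signedPow p (f h) - signedPowOnBall p ℓ h) * ρ ‖h‖ ∂μ)) := by
  have h_lim := tendsto_setIntegral_le_norm_of_odd_add
    (f := fun h => signedPowOnBall p ℓ h * ρ ‖h‖)
    (fun h => by rw [signedPowOnBall_neg, norm_neg, neg_mul])
    (fun δ hδ => integrableOn_bdd_mul_of_integrable_levyWeight (by linarith) hρ hρ0 hA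
      (measurable_signedPowOnBall p ℓ) (abs_signedPowOnBall_le hp ℓ) hδ) h_int
  simpa only [← add_mul, add_sub_cancel] using h_lim

end Cancellation

/-- The kernel of the `p`-Lévy operator applied to `u` at `x`, whose principal-value integral over
`y` is `L u(x) / 2`. -/
noncomputable def levyIntegrand {E : Type*} [NormedAddCommGroup E] (p : ℝ) (ρ : ℝ → ℝ)
    (u : E → ℝ) (x y : E) : ℝ :=
  signedPow p (u x - u y) * ρ ‖x - y‖

lemma levyIntegrand_add_right {E : Type*} [NormedAddCommGroup E] (u : E → ℝ) (x h : E) :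
    levyIntegrand p ρ u x (x + h) = signedPow p (u x - u (x + h)) * ρ ‖h‖ := by
  simp [levyIntegrand]

lemma preimage_add_left_setOf_le_norm_sub {E : Type*} [NormedAddCommGroup E] (x : E) (δ : ℝ) :
    (x + ·) ⁻¹' {y | δ ≤ ‖y - x‖} = {h | δ ≤ ‖h‖} := by
  simp

lemma abs_sub_le_two_mul_of_forall_abs_le {X : Type*} {u : X → ℝ} {M : ℝ} (hM : ∀ y, |u y| ≤ M)
    (x y : X) : |u x - u y| ≤ 2 * M := by
  linarith [abs_sub (u x) (u y), hM x, hM y]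

section Translation

variable {E : Type*} [NormedAddCommGroup E] [MeasurableSpace E] [BorelSpace E]
  {μ : Measure E} [μ.IsAddLeftInvariant]

lemma setIntegral_le_norm_sub {F : Type*} [NormedAddCommGroup F] [NormedSpace ℝ F] (f : E → F)
    (x : E) (δ : ℝ) :
    ∫ y in {y | δ ≤ ‖y - x‖}, f y ∂μ = ∫ h in {h | δ ≤ ‖h‖}, f (x + h) ∂μ := by
  rw [← (measurePreserving_add_left μ x).setIntegral_preimage_emb (measurableEmbedding_addLeft x),
    preimage_add_left_setOf_le_norm_sub]

lemma integrableOn_le_norm_sub_iff {F : Type*} [NormedAddCommGroup F] {f : E → F} {x : E}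
    {δ : ℝ} :
    IntegrableOn f {y | δ ≤ ‖y - x‖} μ ↔
      IntegrableOn (fun h => f (x + h)) {h | δ ≤ ‖h‖} μ := by
  rw [← (measurePreserving_add_left μ x).integrableOn_comp_preimage
    (measurableEmbedding_addLeft x), preimage_add_left_setOf_le_norm_sub]
  rfl

lemma integrableOn_levyIntegrand (hp : 1 < p) (hρ : Measurable ρ) (hρ0 : ∀ r, 0 ≤ ρ r)
    (hA : Integrable (fun h => levyWeight p ρ ‖h‖) μ) {u : E → ℝ} (hu : Measurable u) {M : ℝ}
    (hM : ∀ y, |u y| ≤ M) (x : E) {δ : ℝ} (hδ : 0 < δ) :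
    IntegrableOn (levyIntegrand p ρ u x) {y | δ ≤ ‖y - x‖} μ := by
  rw [integrableOn_le_norm_sub_iff]
  simp only [levyIntegrand_add_right]
  have : 0 ≤ p - 1 := by linarith
  have h_meas := measurable_signedPow p
  refine integrableOn_bdd_mul_of_integrable_levyWeight (B := (2 * M) ^ (p - 1)) (by linarith)
    hρ hρ0 hA (by fun_prop) (fun h => ?_) hδ
  rw [abs_signedPow hp.ne']
  gcongr
  exact abs_sub_le_two_mul_of_forall_abs_le hM x (x + h)

end Translation

lemma exists_tendsto_setIntegral_levyIntegrand {E : Type*} [NormedAddCommGroup E]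
    [NormedSpace ℝ E] [FiniteDimensional ℝ E] [Nontrivial E] [MeasurableSpace E] [BorelSpace E]
    {μ : Measure E} [μ.IsAddHaarMeasure] (hp : 1 < p) (hρ : Measurable ρ) (hρ0 : ∀ r, 0 ≤ ρ r)
    (hA : Integrable (fun h => levyWeight p ρ ‖h‖) μ) {u : E → ℝ} (hu : Measurable u) {M : ℝ}
    (hM : ∀ y, |u y| ≤ M) {x : E} {N : ℝ} (hu_diff : ContDiffOn ℝ 2 u (Metric.ball x 1))
    (hN : ∀ y ∈ Metric.ball x 1, ‖fderiv ℝ (fderiv ℝ u) y‖ ≤ N)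
    (h_fderiv : p < 2 → fderiv ℝ u x ≠ 0)
    (h_ang : Integrable
      (fun h => |fderiv ℝ u x (‖h‖⁻¹ • h)| ^ (p - 2) * levyWeight p ρ ‖h‖) μ) :
    ∃ L, Tendsto (fun δ : ℝ => ∫ y in {y | δ ≤ ‖y - x‖}, levyIntegrand p ρ u x y ∂μ)
        (𝓝[>] 0) (𝓝 L) ∧
      |L| ≤ p * 2 ^ p * N *
          ∫ h, |fderiv ℝ u x (‖h‖⁻¹ • h)| ^ (p - 2) * levyWeight p ρ ‖h‖ ∂μ +
        (p * 2 ^ p * N ^ max 1 (p - 1) + (2 * M) ^ (p - 1)) * ∫ h, levyWeight p ρ ‖h‖ ∂μ := by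
  have hN0 : 0 ≤ N :=
    (norm_nonneg (fderiv ℝ (fderiv ℝ u) x)).trans (hN x (Metric.mem_ball_self one_pos))
  have h_abs (h : E) : |(-fderiv ℝ u x) h| = |fderiv ℝ u x h| := by
    rw [neg_apply, abs_neg]
  have h_taylor (h : E) (hh : ‖h‖ < 1) :
      |u x - u (x + h) - (-fderiv ℝ u x) h| ≤ N * ‖h‖ ^ 2 := by
    have h_eq : u x - u (x + h) - (-fderiv ℝ u x) h =
        -(u (x + h) - u x - fderiv ℝ u x h) := by
      rw [neg_apply]
      ring
    rw [h_eq, abs_neg]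
    exact norm_sub_sub_fderiv_le hu_diff hN hh
  obtain ⟨h_int, h_le⟩ := integrable_and_abs_integral_signedPow_sub_signedPowOnBall_mul_le hp hρ
    hρ0 hA (f := fun h => u x - u (x + h)) (by fun_prop) (ℓ := -fderiv ℝ u x)
    (fun hp2 => neg_ne_zero.2 (h_fderiv hp2)) (by simpa only [h_abs] using h_ang) hN0
    (fun h => abs_sub_le_two_mul_of_forall_abs_le hM x (x + h)) h_taylor
  refine ⟨_, ?_, by simpa only [h_abs] using h_le⟩
  simp only [setIntegral_le_norm_sub, levyIntegrand_add_right]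
  exact tendsto_setIntegral_signedPow_mul_radial hp hρ hρ0 hA h_int

end Levy

theorem stmt_16_general (E : Type*) [NormedAddCommGroup E] [InnerProductSpace ℝ E]
    [FiniteDimensional ℝ E] [Nontrivial E] [MeasurableSpace E] [BorelSpace E] (p : ℝ)
    (hp : 1 < p) :
    ∃ c : ℝ, 0 < c ∧
      ∀ ρ : ℝ → ℝ, Measurable ρ → (∀ t, 0 ≤ ρ t) →
      Integrable (fun h : E => levyWeight p ρ ‖h‖) →
      ∀ (x : E) (u : E → ℝ), Measurable u → ContDiffOn ℝ 2 u (Metric.ball x 1) →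
        ∀ M : ℝ, (∀ y, |u y| ≤ M) →
        ∀ N : ℝ, (∀ y ∈ Metric.ball x 1, ‖fderiv ℝ (fderiv ℝ u) y‖ ≤ N) →
        (p < 2 → fderiv ℝ u x ≠ 0) →
        (∀ δ : ℝ, 0 < δ → IntegrableOn (levyIntegrand p ρ u x) {y | δ ≤ ‖y - x‖}) ∧
        ∃ L : ℝ,
          Tendsto (fun δ : ℝ => 2 * ∫ y in {y | δ ≤ ‖y - x‖}, levyIntegrand p ρ u x y)
            (𝓝[>] 0) (𝓝 L) ∧
          |L| ≤ c * (N * ‖fderiv ℝ u x‖ ^ (p - 2) + N ^ max 1 (p - 1) + M ^ (p - 1)) *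
            ∫ h : E, levyWeight p ρ ‖h‖ := by
  obtain ⟨K, hK, h_angular⟩ := exists_integral_abs_apply_rpow_mul_radial_le (E := E)
    (q := p - 2) (by linarith)
  refine ⟨2 * (p * 2 ^ p * (K + 1)), by positivity, ?_⟩
  intro ρ hρ hρ0 hA x u hu hu_diff M hM N hN h_fderiv
  have hN0 : 0 ≤ N :=
    (norm_nonneg (fderiv ℝ (fderiv ℝ u) x)).trans (hN x (Metric.mem_ball_self one_pos))
  have hM0 : 0 ≤ M := (abs_nonneg (u x)).trans (hM x)
  have hA0 : 0 ≤ ∫ h : E, levyWeight p ρ ‖h‖ :=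
    integral_nonneg fun h => levyWeight_nonneg hρ0 (norm_nonneg h)
  obtain ⟨h_ang, h_ang_le⟩ := h_angular (fderiv ℝ u x) _ (measurable_levyWeight hρ)
    (fun r => levyWeight_nonneg hρ0) hA
  obtain ⟨L, hL, hL_le⟩ := exists_tendsto_setIntegral_levyIntegrand hp hρ hρ0 hA hu hM hu_diff hN
    h_fderiv h_ang
  refine ⟨fun δ hδ => integrableOn_levyIntegrand hp hρ hρ0 hA hu hM x hδ, 2 * L,
    hL.const_mul 2, ?_⟩
  have hM_pow : (2 * M) ^ (p - 1) ≤ p * 2 ^ p * M ^ (p - 1) := by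
    rw [Real.mul_rpow zero_le_two hM0]
    gcongr
    calc (2 : ℝ) ^ (p - 1) ≤ 2 ^ p := by gcongr <;> linarith
      _ ≤ p * 2 ^ p := le_mul_of_one_le_left (by positivity) hp.le
  rw [abs_mul, abs_two, mul_assoc 2, mul_assoc 2]
  refine mul_le_mul_of_nonneg_left ?_ zero_le_two
  calc |L| ≤ p * 2 ^ p * N * (K * ‖fderiv ℝ u x‖ ^ (p - 2) * ∫ h : E, levyWeight p ρ ‖h‖) +
        (p * 2 ^ p * N ^ max 1 (p - 1) + p * 2 ^ p * M ^ (p - 1)) *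
          ∫ h : E, levyWeight p ρ ‖h‖ := hL_le.trans (by gcongr)
    _ = p * 2 ^ p * (K * (N * ‖fderiv ℝ u x‖ ^ (p - 2)) + 1 * (N ^ max 1 (p - 1) + M ^ (p - 1))) *
          ∫ h : E, levyWeight p ρ ‖h‖ := by ring
    _ ≤ p * 2 ^ p * ((K + 1) * (N * ‖fderiv ℝ u x‖ ^ (p - 2)) +
          (K + 1) * (N ^ max 1 (p - 1) + M ^ (p - 1))) * ∫ h : E, levyWeight p ρ ‖h‖ := by
        gcongr <;> linarith
    _ = p * 2 ^ p * (K + 1) * (N * ‖fderiv ℝ u x‖ ^ (p - 2) + N ^ max 1 (p - 1) +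
          M ^ (p - 1)) * ∫ h : E, levyWeight p ρ ‖h‖ := by ring

/-- Pointwise estimate for the `p`-Lévy operator with a radial
kernel `ν(h) = ρ(|h|)`: there is `c = c(d,p) > 0` such that, whenever
`A = ∫ (1 ∧ |h|^p) ν(h) dh < ∞`, `u` is bounded (by `M`) and measurable, `C²` on
`B(x,1)` with `sup_{B(x,1)}(|u| + |∇u| + ‖D²u‖) ≤ N` (and `∇u(x) ≠ 0` if `1<p<2`),
the truncated integrals are integrable, the principal value
`Lu(x) = lim_{δ→0⁺} 2∫_{|y-x|≥δ} |u(x)-u(y)|^{p-2}(u(x)-u(y)) ν(x-y) dy` exists, and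
`|Lu(x)| ≤ c (N |∇u(x)|^{p-2} + N^{max(1,p-1)} + M^{p-1}) A`. -/
theorem stmt_16 (d : ℕ) (hd : 1 ≤ d) (p : ℝ) (hp : 1 < p) :
    ∃ c : ℝ, 0 < c ∧
      ∀ ρ : ℝ → ℝ, Measurable ρ → (∀ t, 0 ≤ ρ t) →
      Integrable (fun h : EuclideanSpace ℝ (Fin d) => min 1 (‖h‖ ^ p) * ρ ‖h‖) →
      ∀ (x : EuclideanSpace ℝ (Fin d)) (u : EuclideanSpace ℝ (Fin d) → ℝ),
        Measurable u →
        ContDiffOn ℝ 2 u (Metric.ball x 1) →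
        ∀ M : ℝ, (∀ y, |u y| ≤ M) →
        ∀ N : ℝ, (∀ y ∈ Metric.ball x 1,
          |u y| + ‖fderiv ℝ u y‖ + ‖fderiv ℝ (fderiv ℝ u) y‖ ≤ N) →
        (p < 2 → gradient u x ≠ 0) →
        (∀ δ : ℝ, 0 < δ → δ ≤ 1 →
          IntegrableOn
            (fun y => |u x - u y| ^ (p - 2) * (u x - u y) * ρ ‖x - y‖)
            {y : EuclideanSpace ℝ (Fin d) | δ ≤ ‖y - x‖}) ∧
        ∃ L : ℝ,
          Tendsto (fun δ : ℝ =>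
              2 * ∫ y in {y : EuclideanSpace ℝ (Fin d) | δ ≤ ‖y - x‖},
                |u x - u y| ^ (p - 2) * (u x - u y) * ρ ‖x - y‖)
            (𝓝[>] (0 : ℝ)) (𝓝 L) ∧
          |L| ≤
            c * (N * ‖gradient u x‖ ^ (p - 2) + N ^ max 1 (p - 1) + M ^ (p - 1)) *
              ∫ h : EuclideanSpace ℝ (Fin d), min 1 (‖h‖ ^ p) * ρ ‖h‖ := by
  have : NeZero d := ⟨by lia⟩
  obtain ⟨c, hc, h_general⟩ := stmt_16_general (EuclideanSpace ℝ (Fin d)) p hp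
  refine ⟨c, hc, fun ρ hρ hρ0 hA x u hu hu_diff M hM N hN h_grad => ?_⟩
  have h_norm : ‖gradient u x‖ = ‖fderiv ℝ u x‖ := LinearIsometryEquiv.norm_map _ _
  have h_fderiv (hp2 : p < 2) : fderiv ℝ u x ≠ 0 := by
    rw [← norm_ne_zero_iff, ← h_norm, norm_ne_zero_iff]
    exact h_grad hp2
  have h_hess : ∀ y ∈ Metric.ball x 1, ‖fderiv ℝ (fderiv ℝ u) y‖ ≤ N := fun y hy =>
    (le_add_of_nonneg_left (by positivity)).trans (hN y hy)
  rw [h_norm]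
  obtain ⟨h_int, h_lim⟩ := h_general ρ hρ hρ0 hA x u hu hu_diff M hM N h_hess h_fderiv
  exact ⟨fun δ hδ _ => h_int δ hδ, h_lim⟩
end
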